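/- arXiv:1408.4747 — 7 statements merged into one kernel-verified Lean document; each statement's English description precedes it below -/
import Mathlib

section
/- Let (ξ_n)_{n≥1} be i.i.d. integrable real random variables with E[ξ_1] > 0, let μ > 0, h ∈ [0,∞), A > 0, and w ≥ 0, and let (W_n)_{n≥0} be the DE-CuSum sequence started at w (defined pathwise from (ξ_n)). Define τ_A = inf{n ≥ 1 : W_n > A} and τ_{<0} = inf{n ≥ 1 : W_n < 0} (values in ℕ ∪ {∞}). Then ℙ(τ_A < τ_{<0}) ≥ ℙ(S_n ≥ 0 for all n ≥ 1), i.e., the probability that the DE-CuSum statistic crosses the threshold A before ever going below 0 is at least the probability that the random walk of partial sums stays nonnegative forever. -/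
open MeasureTheory Filter Set ProbabilityTheory
open scoped ENNReal

/-- DE-CuSum sequence with parameters `μ > 0` and `h ∈ [0,∞)`, started at `w`:
`W_{n+1} = min (W_n + μ) 0` if `W_n < 0`, and `W_{n+1} = max (W_n + ξ_{n+1}) (-h)` if `W_n ≥ 0`. -/
noncomputable def deCusum (ξ : ℕ → ℝ) (μ h w : ℝ) : ℕ → ℝ
  | 0 => w
  | n + 1 =>
    if deCusum ξ μ h w n < 0 then min (deCusum ξ μ h w n + μ) 0
    else max (deCusum ξ μ h w n + ξ n) (-h)
/-- Partial sum `S_n = ξ_1 + ⋯ + ξ_n` (with the increments indexed from `0`), `S_0 = 0`. -/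
def psum (ξ : ℕ → ℝ) (n : ℕ) : ℝ := ∑ k ∈ Finset.range n, ξ k
/-- First time `n ≥ 1` at which `P n` holds, valued in `ℕ∞` with `inf ∅ = ∞`. -/
noncomputable def firstTime (P : ℕ → Prop) : ℕ∞ :=
  sInf ((↑) '' {n : ℕ | 1 ≤ n ∧ P n})

/-- For i.i.d. integrable increments with positive mean, the probability that the DE-CuSum
statistic started at `w ≥ 0` crosses the threshold `A > 0` before ever going below `0` is at
least the probability that the random walk of partial sums stays nonnegative forever. -/
theorem deCusum_cross_prob_ge {Ω : Type*} [MeasurableSpace Ω] (P : Measure Ω)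
    [IsProbabilityMeasure P] (ξ : ℕ → Ω → ℝ) (hmeas : ∀ n, Measurable (ξ n))
    (hindep : iIndepFun ξ P)
    (hid : ∀ n, IdentDistrib (ξ n) (ξ 0) P P)
    (hint : Integrable (ξ 0) P) (hmean : 0 < ∫ ω, ξ 0 ω ∂P)
    (μ h w A : ℝ) (hμ : 0 < μ) (hh : 0 ≤ h) (hw : 0 ≤ w) (hA : 0 < A) :
    P {ω | ∀ n : ℕ, 1 ≤ n → 0 ≤ psum (fun k => ξ k ω) n} ≤
      P {ω | firstTime (fun n => A < deCusum (fun k => ξ k ω) μ h w n) <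
             firstTime (fun n => deCusum (fun k => ξ k ω) μ h w n < 0)} := by
  have hslln := strong_law_ae_real ξ hint (fun i j hij => hindep.indepFun hij) hid
  apply measure_mono_ae
  filter_upwards [hslln] with ω hlim hS
  have hS' : ∀ n : ℕ, 1 ≤ n → 0 ≤ psum (fun k => ξ k ω) n := hS
  have hS0 : ∀ n : ℕ, 0 ≤ psum (fun k => ξ k ω) n := by
    intro n
    rcases Nat.eq_zero_or_pos n with rfl | hn
    · simp [psum]
    · exact hS' n hn
  have hW : ∀ n : ℕ, deCusum (fun k => ξ k ω) μ h w n = w + psum (fun k => ξ k ω) n := by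
    intro n
    induction n with
    | zero => simp [psum, deCusum]
    | succ n ih =>
      have h1 := hS0 n
      have h2 := hS0 (n + 1)
      have h3 : psum (fun k => ξ k ω) (n + 1) = psum (fun k => ξ k ω) n + ξ n ω := by
        simp [psum, Finset.sum_range_succ]
      rw [deCusum, ih, if_neg (by linarith), max_eq_left (by linarith), h3]
      ring
  have htend : Tendsto (fun n : ℕ => psum (fun k => ξ k ω) n) atTop atTop := by
    have h1 := hlim.pos_mul_atTop hmean (tendsto_natCast_atTop_atTop (R := ℝ))
    refine h1.congr' ?_
    filter_upwards [eventually_ge_atTop 1] with n hn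
    have hn' : (n : ℝ) ≠ 0 := by positivity
    rw [div_mul_cancel₀ _ hn']
    rfl
  obtain ⟨n, hn1, hn⟩ := ((eventually_ge_atTop 1).and (htend.eventually_gt_atTop A)).exists
  change firstTime (fun n => A < deCusum (fun k => ξ k ω) μ h w n) <
             firstTime (fun n => deCusum (fun k => ξ k ω) μ h w n < 0)
  have htop : firstTime (fun n => deCusum (fun k => ξ k ω) μ h w n < 0) = ⊤ := by
    unfold firstTime
    rw [sInf_eq_top]
    rintro _ ⟨m, ⟨_, hm⟩, rfl⟩
    have h1 := hS0 m
    have h2 := hW m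
    exact absurd hm (by simp only [not_lt]; linarith)
  rw [htop]
  refine lt_of_le_of_lt (sInf_le ⟨n, ⟨hn1, ?_⟩, rfl⟩) (ENat.coe_lt_top n)
  change A < deCusum (fun k => ξ k ω) μ h w n
  rw [hW n]
  linarith
end

section
/- Let (ξ_n)_{n≥1} be i.i.d. integrable real random variables with E[ξ_1] > 0, and let S_n = ∑_{k=1}^n ξ_k. Then q := ℙ(S_n ≥ 0 for all n ≥ 1) > 0. -/
open MeasureTheory Filter Set ProbabilityTheory
open scoped ENNReal

/-- For i.i.d. integrable increments with positive mean, the probability that the random walk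
of partial sums stays nonnegative forever is strictly positive. -/
theorem prob_walk_nonneg_pos {Ω : Type*} [MeasurableSpace Ω] (P : Measure Ω)
    [IsProbabilityMeasure P] (ξ : ℕ → Ω → ℝ) (hmeas : ∀ n, Measurable (ξ n))
    (hindep : iIndepFun ξ P)
    (hid : ∀ n, IdentDistrib (ξ n) (ξ 0) P P)
    (hint : Integrable (ξ 0) P) (hmean : 0 < ∫ ω, ξ 0 ω ∂P) :
    0 < P {ω | ∀ n : ℕ, 1 ≤ n → 0 ≤ psum (fun k => ξ k ω) n} := by
  have hlaw : ∀ m, P.map (fun ω k => ξ (k + m) ω) = P.map (fun ω k => ξ k ω) := by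
    intro m
    have h1 := (iIndepFun_iff_map_fun_eq_infinitePi_map hmeas).1 hindep
    have h2 := (iIndepFun_iff_map_fun_eq_infinitePi_map (fun k => hmeas (k + m))).1
      (hindep.precomp (g := fun k => k + m) (add_left_injective m))
    rw [h1, h2]
    congr 1
    funext k
    rw [(hid (k + m)).map_eq, (hid k).map_eq]
  let B : Set (ℕ → ℝ) := {x | ∀ n : ℕ, 1 ≤ n → 0 ≤ psum x n}
  have hB : MeasurableSet B := by
    have : B = ⋂ n : ℕ, ⋂ _ : 1 ≤ n, {x | 0 ≤ psum x n} := by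
      ext x; simp [B]
    rw [this]
    refine MeasurableSet.iInter fun n => MeasurableSet.iInter fun _ => ?_
    refine measurableSet_le measurable_const ?_
    unfold psum
    fun_prop
  have hshift : ∀ m, P {ω | (fun k => ξ (k + m) ω) ∈ B} = P {ω | (fun k => ξ k ω) ∈ B} := by
    intro m
    have h := congrArg (fun μ => μ B) (hlaw m)
    rw [Measure.map_apply (by fun_prop) hB, Measure.map_apply (by fun_prop) hB] at h
    exact h
  change 0 < P {ω | (fun k => ξ k ω) ∈ B}
  rw [pos_iff_ne_zero]
  intro h0
  have hnone : ∀ᵐ ω ∂P, ∀ m, ¬ (fun k => ξ (k + m) ω) ∈ B := by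
    rw [ae_all_iff]
    intro m
    rw [ae_iff]
    simpa using (hshift m).trans h0
  have hslln := strong_law_ae_real ξ hint (fun i j hij => hindep.indepFun hij) hid
  obtain ⟨ω, hω, hl⟩ := (hnone.and hslln).exists
  have ht : Tendsto (fun n : ℕ => psum (fun k => ξ k ω) n) atTop atTop := by
    have h := hl.pos_mul_atTop hmean (tendsto_natCast_atTop_atTop (R := ℝ))
    refine h.congr' ?_
    filter_upwards [eventually_ge_atTop 1] with n hn
    have : (n : ℝ) ≠ 0 := by positivity
    rw [div_mul_cancel₀ _ this]
    rfl
  rw [← Nat.cofinite_eq_atTop] at ht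
  obtain ⟨m, hm⟩ := ht.exists_forall_le
  apply hω m
  intro n _
  have h := hm (m + n)
  simp only [psum, Finset.sum_range_add] at h ⊢
  simp only [add_comm _ m]
  linarith
end

section
/- Let (ξ_n)_{n≥1} be i.i.d. integrable real random variables with E[ξ_1] > 0, let μ > 0, h ∈ [0,∞), A ≥ 0, and w ∈ [−h,∞), and let (W_n)_{n≥0} be the DE-CuSum sequence started at w. Let τ_A = inf{n ≥ 1 : W_n > A} and let N = 1 + #{n ≥ 0 : n < τ_A, W_n ≥ 0 and W_{n+1} < 0} be the number of cycles (one plus the number of downcrossings of level 0 by the statistic before it first exceeds A). Then, with q = ℙ(S_n ≥ 0 for all n ≥ 1), one has ℙ(N ≥ k) ≤ (1 − q)^{k−1} for every k ≥ 1, and hence E[N] ≤ 1/q < ∞; in particular N < ∞ almost surely. The bound 1/q does not depend on w or on the threshold A. -/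
open MeasureTheory Filter Set ProbabilityTheory
open scoped ENNReal

/-- Number of "cycles": one plus the number of downcrossings of level `0` by the DE-CuSum
statistic before it first exceeds the threshold `A`. -/
noncomputable def numCycles (ξ : ℕ → ℝ) (μ h w A : ℝ) : ℕ∞ :=
  1 + Set.encard {n : ℕ |
    (n : ℕ∞) < firstTime (fun m => A < deCusum ξ μ h w m) ∧
    0 ≤ deCusum ξ μ h w n ∧ deCusum ξ μ h w (n + 1) < 0}

/-- Number of downcrossings of level `0` strictly before time `n`. -/
noncomputable def dcount (x : ℕ → ℝ) (μ h w : ℝ) : ℕ → ℕ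
  | 0 => 0
  | n + 1 => dcount x μ h w n +
      if 0 ≤ deCusum x μ h w n ∧ deCusum x μ h w (n + 1) < 0 then 1 else 0

lemma deCusum_succ (x : ℕ → ℝ) (μ h w : ℝ) (n : ℕ) :
    deCusum x μ h w (n + 1) = if deCusum x μ h w n < 0 then min (deCusum x μ h w n + μ) 0
    else max (deCusum x μ h w n + x n) (-h) := rfl

lemma dcount_succ (x : ℕ → ℝ) (μ h w : ℝ) (n : ℕ) :
    dcount x μ h w (n + 1) = dcount x μ h w n +
      if 0 ≤ deCusum x μ h w n ∧ deCusum x μ h w (n + 1) < 0 then 1 else 0 := rfl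

lemma dcount_mono (x : ℕ → ℝ) (μ h w : ℝ) : Monotone (dcount x μ h w) :=
  monotone_nat_of_le_succ fun n => by rw [dcount_succ]; omega

lemma psum_succ (x : ℕ → ℝ) (n : ℕ) : psum x (n + 1) = psum x n + x n :=
  Finset.sum_range_succ _ _

/-- If the partial sums after `m` stay nonnegative, the statistic stays above zero. -/
lemma deCusum_stay (x : ℕ → ℝ) (μ h w : ℝ) (m : ℕ) (hm : 0 ≤ deCusum x μ h w m)
    (hg : ∀ n : ℕ, 1 ≤ n → 0 ≤ psum (fun k => x (m + k)) n) (n : ℕ) :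
    psum (fun k => x (m + k)) n ≤ deCusum x μ h w (m + n) ∧ 0 ≤ deCusum x μ h w (m + n) ∧
      dcount x μ h w (m + n) = dcount x μ h w m := by
  induction n with
  | zero => simpa [psum] using hm
  | succ n ih =>
    obtain ⟨h1, h2, h3⟩ := ih
    have h4 : psum (fun k => x (m + k)) (n + 1) ≤ deCusum x μ h w (m + n + 1) := by
      rw [deCusum_succ, if_neg (not_lt.2 h2), psum_succ]
      exact le_max_of_le_left (by linarith)
    have h5 := (hg (n + 1) (by omega)).trans h4
    refine ⟨h4, h5, ?_⟩
    rw [← add_assoc, dcount_succ, if_neg (fun hc => absurd h5 (not_le.2 hc.2)), h3, add_zero]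

/-- If there are at least `j + 1` downcrossings, some time has `W ≥ 0` and exactly `j` so far. -/
lemma exists_start (x : ℕ → ℝ) (μ h w : ℝ) (j n : ℕ) (hn : j + 1 ≤ dcount x μ h w n) :
    ∃ m, 0 ≤ deCusum x μ h w m ∧ dcount x μ h w m = j := by
  induction n with
  | zero => simp [dcount] at hn
  | succ n ih =>
    by_cases hc : j + 1 ≤ dcount x μ h w n
    · exact ih hc
    · rw [dcount_succ] at hn
      split_ifs at hn with hp
      · exact ⟨n, hp.1, by omega⟩
      · omega

lemma dcount_eq_card (x : ℕ → ℝ) (μ h w : ℝ) (n : ℕ) :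
    dcount x μ h w n = ((Finset.range n).filter
      (fun i => 0 ≤ deCusum x μ h w i ∧ deCusum x μ h w (i + 1) < 0)).card := by
  induction n with
  | zero => simp [dcount]
  | succ n ih =>
    rw [dcount_succ, ih, Finset.range_add_one, Finset.filter_insert]
    split_ifs <;> simp

lemma numCycles_le (x : ℕ → ℝ) (μ h w A : ℝ) (j : ℕ)
    (hj : ((j + 1 : ℕ) : ℕ∞) ≤ numCycles x μ h w A) : ∃ n, j ≤ dcount x μ h w n := by
  unfold numCycles at hj
  rw [Nat.cast_add, add_comm, Nat.cast_one] at hj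
  have hj' := (ENat.add_le_add_iff_left (by simp)).1 hj
  obtain ⟨t, ht, htc⟩ := Set.exists_subset_encard_eq hj'
  have hfin : t.Finite := Set.finite_of_encard_eq_coe htc
  lift t to Finset ℕ using hfin
  rw [Set.encard_coe_eq_coe_finsetCard] at htc
  have htc' : t.card = j := by exact_mod_cast htc
  obtain ⟨N, hN⟩ := t.exists_nat_subset_range
  refine ⟨N, ?_⟩
  rw [dcount_eq_card, ← htc']
  apply Finset.card_le_card
  intro i hi
  exact Finset.mem_filter.2 ⟨hN hi, (ht hi).2⟩

lemma measurable_deCusum {Ω : Type*} [MeasurableSpace Ω] (ξ : ℕ → Ω → ℝ) (μ h w : ℝ) (n : ℕ)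
    (hm : ∀ i < n, Measurable (ξ i)) : Measurable fun ω => deCusum (fun j => ξ j ω) μ h w n := by
  induction n with
  | zero => exact measurable_const
  | succ n ih =>
    have h1 := ih fun i hi => hm i (by omega)
    have h2 := hm n (by omega)
    simp only [deCusum_succ]
    refine Measurable.ite (measurableSet_lt h1 measurable_const) ?_ ?_
    · exact (h1.add_const _).min measurable_const
    · exact (h1.add h2).max measurable_const

lemma measurable_dcount {Ω : Type*} [MeasurableSpace Ω] (ξ : ℕ → Ω → ℝ) (μ h w : ℝ) (n : ℕ)
    (hm : ∀ i < n, Measurable (ξ i)) : Measurable fun ω => dcount (fun j => ξ j ω) μ h w n := by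
  induction n with
  | zero => exact measurable_const
  | succ n ih =>
    have h1 := ih fun i hi => hm i (by omega)
    have h2 := measurable_deCusum ξ μ h w n fun i hi => hm i (by omega)
    have h3 := measurable_deCusum ξ μ h w (n + 1) hm
    simp only [dcount_succ]
    refine h1.add (Measurable.ite ?_ measurable_const measurable_const)
    exact (measurableSet_le measurable_const h2).inter (measurableSet_lt h3 measurable_const)

/-- The `j`-th cycle starts at time `m`. -/
def startSet {Ω : Type*} (ξ : ℕ → Ω → ℝ) (μ h w : ℝ) (j m : ℕ) : Set Ω :=
  {ω | (0 ≤ deCusum (fun j => ξ j ω) μ h w m ∧ dcount (fun j => ξ j ω) μ h w m = j) ∧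
    ∀ i < m, ¬ (0 ≤ deCusum (fun j => ξ j ω) μ h w i ∧ dcount (fun j => ξ j ω) μ h w i = j)}

lemma measurableSet_startSet {Ω : Type*} [MeasurableSpace Ω] (ξ : ℕ → Ω → ℝ) (μ h w : ℝ)
    (j m : ℕ) (hm : ∀ i < m, Measurable (ξ i)) : MeasurableSet (startSet ξ μ h w j m) := by
  have key : ∀ i ≤ m, MeasurableSet {ω | 0 ≤ deCusum (fun j => ξ j ω) μ h w i ∧
      dcount (fun j => ξ j ω) μ h w i = j} := fun i hi =>
    (measurableSet_le measurable_const
      (measurable_deCusum ξ μ h w i fun k hk => hm k (by omega))).inter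
    (measurable_dcount ξ μ h w i (fun k hk => hm k (by omega)) (measurableSet_singleton j))
  refine (key m le_rfl).inter ?_
  have : {ω | ∀ i < m, ¬ (0 ≤ deCusum (fun j => ξ j ω) μ h w i ∧
      dcount (fun j => ξ j ω) μ h w i = j)} = ⋂ i, ⋂ (_ : i < m), {ω |
      0 ≤ deCusum (fun j => ξ j ω) μ h w i ∧ dcount (fun j => ξ j ω) μ h w i = j}ᶜ := by
    ext ω; simp
  change MeasurableSet {ω | ∀ i < m, ¬ (0 ≤ deCusum (fun j => ξ j ω) μ h w i ∧
      dcount (fun j => ξ j ω) μ h w i = j)}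
  rw [this]
  exact MeasurableSet.iInter fun i => MeasurableSet.iInter fun hi => (key i hi.le).compl

/-- The walk restarted at time `m` stays nonnegative. -/
def goodSet {Ω : Type*} (ξ : ℕ → Ω → ℝ) (m : ℕ) : Set Ω :=
  {ω | ∀ n : ℕ, 1 ≤ n → 0 ≤ psum (fun k => ξ (m + k) ω) n}

lemma measurableSet_goodSet {Ω : Type*} [MeasurableSpace Ω] (ξ : ℕ → Ω → ℝ) (m : ℕ)
    (hm : ∀ i, m ≤ i → Measurable (ξ i)) : MeasurableSet (goodSet ξ m) := by
  have : goodSet ξ m = ⋂ n : ℕ, ⋂ (_ : 1 ≤ n), {ω | 0 ≤ psum (fun k => ξ (m + k) ω) n} := by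
    ext ω; simp [goodSet]
  rw [this]
  refine MeasurableSet.iInter fun n => MeasurableSet.iInter fun _ =>
    measurableSet_le measurable_const ?_
  unfold psum
  exact Finset.measurable_sum _ fun i _ => hm _ (by omega)

section prob
variable {Ω : Type*} [MeasurableSpace Ω] (P : Measure Ω) [IsProbabilityMeasure P]
  (ξ : ℕ → Ω → ℝ)

lemma measure_goodSet (hindep : iIndepFun ξ P)
    (hid : ∀ n, IdentDistrib (ξ n) (ξ 0) P P) (m : ℕ) :
    P (goodSet ξ m) = P (goodSet ξ 0) := by
  have h1 : iIndepFun (fun k => ξ (m + k)) P :=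
    hindep.precomp (g := fun k => m + k) (add_right_injective m)
  have h2 : IdentDistrib (fun ω k => ξ (m + k) ω) (fun ω k => ξ k ω) P P :=
    IdentDistrib.pi (fun i => (hid (m + i)).trans (hid i).symm) h1 hindep
  have hms : MeasurableSet (goodSet (fun k (x : ℕ → ℝ) => x k) 0) :=
    measurableSet_goodSet _ 0 fun i _ => measurable_pi_apply i
  have h3 := h2.measure_mem_eq hms
  convert h3 using 2 <;> (ext ω; simp [goodSet])

lemma indep_start_good (hmeas : ∀ n, Measurable (ξ n)) (hindep : iIndepFun ξ P)
    (μ h w : ℝ) (j m : ℕ) :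
    P (startSet ξ μ h w j m ∩ (goodSet ξ m)ᶜ) =
      P (startSet ξ μ h w j m) * P (goodSet ξ m)ᶜ := by
  have hI := indep_iSup_of_disjoint (S := Set.Iio m) (T := Set.Ici m)
    (fun i => (hmeas i).comap_le) hindep.iIndep
    (Set.disjoint_left.2 fun i hi hi' => (Set.mem_Iio.1 hi).not_ge (Set.mem_Ici.1 hi'))
  refine (Indep_iff _ _ _).1 hI _ _ ?_ ?_
  · refine @measurableSet_startSet Ω
      (⨆ i ∈ Set.Iio m, MeasurableSpace.comap (ξ i) Real.measurableSpace) ξ μ h w j m fun i hi => ?_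
    exact Measurable.mono (comap_measurable (ξ i))
      (le_iSup₂_of_le (f := fun i (_ : i ∈ Set.Iio m) => MeasurableSpace.comap (ξ i) Real.measurableSpace)
        i hi le_rfl) le_rfl
  · refine MeasurableSet.compl (@measurableSet_goodSet Ω
      (⨆ i ∈ Set.Ici m, MeasurableSpace.comap (ξ i) Real.measurableSpace) ξ m fun i hi => ?_)
    exact Measurable.mono (comap_measurable (ξ i))
      (le_iSup₂_of_le (f := fun i (_ : i ∈ Set.Ici m) => MeasurableSpace.comap (ξ i) Real.measurableSpace)
        i hi le_rfl) le_rfl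

/-- At least `j` downcrossings in total. -/
def manySet {Ω : Type*} (ξ : ℕ → Ω → ℝ) (μ h w : ℝ) (j : ℕ) : Set Ω :=
  {ω | ∃ n, j ≤ dcount (fun j => ξ j ω) μ h w n}

lemma measurableSet_manySet (hmeas : ∀ n, Measurable (ξ n)) (μ h w : ℝ) (j : ℕ) :
    MeasurableSet (manySet ξ μ h w j) := by
  have : manySet ξ μ h w j = ⋃ n, {ω | j ≤ dcount (fun j => ξ j ω) μ h w n} := by
    ext ω; simp [manySet]
  rw [this]
  exact MeasurableSet.iUnion fun n =>
    measurableSet_le measurable_const (measurable_dcount ξ μ h w n fun i _ => hmeas i)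

lemma measure_manySet (hmeas : ∀ n, Measurable (ξ n)) (hindep : iIndepFun ξ P)
    (hid : ∀ n, IdentDistrib (ξ n) (ξ 0) P P) (μ h w : ℝ) (j : ℕ) :
    P (manySet ξ μ h w j) ≤ (1 - P (goodSet ξ 0)) ^ j := by
  classical
  induction j with
  | zero => simpa using prob_le_one
  | succ j ih =>
    have hsub : manySet ξ μ h w (j + 1) ⊆ ⋃ m, (startSet ξ μ h w j m ∩ (goodSet ξ m)ᶜ) := by
      rintro ω ⟨n, hn⟩
      have hex := exists_start (fun j => ξ j ω) μ h w j n hn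
      refine Set.mem_iUnion.2 ⟨Nat.find hex, ⟨Nat.find_spec hex, fun i hi => Nat.find_min hex hi⟩, ?_⟩
      intro hg
      have hs := Nat.find_spec hex
      have h1 := (deCusum_stay (fun j => ξ j ω) μ h w _ hs.1 hg n).2.2
      have h2 := dcount_mono (fun j => ξ j ω) μ h w (Nat.le_add_left n (Nat.find hex))
      have h3 := hs.2
      omega
    have hms : ∀ m, MeasurableSet (startSet ξ μ h w j m) := fun m =>
      measurableSet_startSet ξ μ h w j m fun i _ => hmeas i
    calc P (manySet ξ μ h w (j + 1))
        ≤ ∑' m, P (startSet ξ μ h w j m ∩ (goodSet ξ m)ᶜ) :=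
          (measure_mono hsub).trans (measure_iUnion_le _)
      _ = ∑' m, P (startSet ξ μ h w j m) * (1 - P (goodSet ξ 0)) := by
          congr 1; ext m
          rw [indep_start_good P ξ hmeas hindep,
            prob_compl_eq_one_sub (measurableSet_goodSet ξ m fun i _ => hmeas i),
            measure_goodSet P ξ hindep hid m]
      _ = P (⋃ m, startSet ξ μ h w j m) * (1 - P (goodSet ξ 0)) := by
          rw [ENNReal.tsum_mul_right, measure_iUnion _ hms]
          intro a b hab
          refine Set.disjoint_left.2 fun ω ha hb => ?_
          rcases lt_or_gt_of_ne hab with hl | hl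
          · exact hb.2 a hl ha.1
          · exact ha.2 b hl hb.1
      _ ≤ P (manySet ξ μ h w j) * (1 - P (goodSet ξ 0)) := by
          gcongr
          refine Set.iUnion_subset fun m ω hω => ⟨m, hω.1.2.ge⟩
      _ ≤ _ := by rw [pow_succ]; gcongr

lemma psum_tendsto (x : ℕ → ℝ) (c : ℝ) (hc : 0 < c)
    (hx : Tendsto (fun n : ℕ => (∑ i ∈ Finset.range n, x i) / n) atTop (nhds c)) :
    Tendsto (psum x) atTop atTop := by
  have h1 := hx.pos_mul_atTop hc tendsto_natCast_atTop_atTop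
  refine h1.congr' ?_
  filter_upwards [eventually_gt_atTop 0] with n hn
  have : (n : ℝ) ≠ 0 := by positivity
  rw [div_mul_cancel₀ _ this]; rfl

lemma psum_shift (x : ℕ → ℝ) (m n : ℕ) :
    psum (fun k => x (m + k)) n = psum x (m + n) - psum x m := by
  unfold psum
  rw [Finset.sum_range_add]; ring

lemma goodSet_pos (hindep : iIndepFun ξ P)
    (hid : ∀ n, IdentDistrib (ξ n) (ξ 0) P P)
    (hint : Integrable (ξ 0) P) (hmean : 0 < ∫ ω, ξ 0 ω ∂P) : P (goodSet ξ 0) ≠ 0 := by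
  intro h0
  have hnull : P (⋃ m, goodSet ξ m) = 0 :=
    measure_iUnion_null fun m => (measure_goodSet P ξ hindep hid m).trans h0
  have hS := strong_law_ae_real ξ hint (fun i j hij => hindep.indepFun hij) hid
  have hall : ∀ᵐ ω ∂P, ω ∈ ⋃ m, goodSet ξ m := by
    filter_upwards [hS] with ω hω
    have ht := psum_tendsto (fun i => ξ i ω) _ hmean hω
    obtain ⟨m, hm⟩ := Nat.cofinite_eq_atTop ▸ ht |>.exists_forall_le
    refine Set.mem_iUnion.2 ⟨m, fun n _ => ?_⟩
    rw [psum_shift (fun i => ξ i ω)]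
    linarith [hm (m + n)]
  have hae : ∀ᵐ ω ∂P, ω ∉ ⋃ m, goodSet ξ m := measure_eq_zero_iff_ae_notMem.1 hnull
  obtain ⟨ω, h1, h2⟩ := (hall.and hae).exists
  exact h2 h1

end prob

lemma enat_le_tsum (x : ℕ∞) :
    (x : ℝ≥0∞) ≤ ∑' j : ℕ, if ((j + 1 : ℕ) : ℕ∞) ≤ x then 1 else 0 := by
  induction x using ENat.recTopCoe with
  | top => simp
  | coe n =>
    refine le_trans ?_ (ENNReal.sum_le_tsum (Finset.range n))
    rw [Finset.sum_congr rfl (g := fun _ => (1 : ℝ≥0∞))]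
    · simp
    · intro j hj
      rw [if_pos]
      exact_mod_cast Finset.mem_range.1 hj

/-- For i.i.d. integrable increments with positive mean, with
`q = ℙ(S_n ≥ 0 for all n ≥ 1)`, the number of cycles `N` of the DE-CuSum statistic started at
`w ∈ [-h,∞)` before crossing `A ≥ 0` satisfies `ℙ(N ≥ k) ≤ (1-q)^(k-1)` for all `k ≥ 1`,
hence `E[N] ≤ 1/q < ∞`; in particular `N < ∞` almost surely. The bound `1/q` does not depend
on `w` or on the threshold `A`. -/
theorem numCycles_bound {Ω : Type*} [MeasurableSpace Ω] (P : Measure Ω)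
    [IsProbabilityMeasure P] (ξ : ℕ → Ω → ℝ) (hmeas : ∀ n, Measurable (ξ n))
    (hindep : iIndepFun ξ P)
    (hid : ∀ n, IdentDistrib (ξ n) (ξ 0) P P)
    (hint : Integrable (ξ 0) P) (hmean : 0 < ∫ ω, ξ 0 ω ∂P)
    (μ h w A : ℝ) (hμ : 0 < μ) (hh : 0 ≤ h) (hw : -h ≤ w) (hA : 0 ≤ A)
    (q : ℝ≥0∞) (hq : q = P {ω | ∀ n : ℕ, 1 ≤ n → 0 ≤ psum (fun k => ξ k ω) n}) :
    (∀ k : ℕ, 1 ≤ k →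
      P {ω | (k : ℕ∞) ≤ numCycles (fun j => ξ j ω) μ h w A} ≤ (1 - q) ^ (k - 1)) ∧
    ∫⁻ ω, (numCycles (fun j => ξ j ω) μ h w A : ℝ≥0∞) ∂P ≤ q⁻¹ ∧
    q⁻¹ < ⊤ ∧
    ∀ᵐ ω ∂P, numCycles (fun j => ξ j ω) μ h w A < ⊤ := by
  have hq' : q = P (goodSet ξ 0) := by
    rw [hq]; unfold goodSet; simp only [zero_add]
  have hq0 : q ≠ 0 := hq' ▸ goodSet_pos P ξ hindep hid hint hmean
  have hq1 : q ≤ 1 := hq' ▸ prob_le_one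
  have hB : ∀ j, P (manySet ξ μ h w j) ≤ (1 - q) ^ j := fun j =>
    hq' ▸ measure_manySet P ξ hmeas hindep hid μ h w j
  have hmB := measurableSet_manySet ξ hmeas μ h w
  let f : Ω → ℝ≥0∞ := fun ω => ∑' j, (manySet ξ μ h w j).indicator 1 ω
  have hf : Measurable f := Measurable.ennreal_tsum fun j => measurable_one.indicator (hmB j)
  have hNf : ∀ ω, (numCycles (fun j => ξ j ω) μ h w A : ℝ≥0∞) ≤ f ω := by
    intro ω
    refine (enat_le_tsum _).trans (ENNReal.tsum_le_tsum fun j => ?_)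
    split_ifs with hj
    · rw [Set.indicator_of_mem]
      · simp
      · exact numCycles_le _ μ h w A j hj
    · exact zero_le
  have hfi : ∫⁻ ω, f ω ∂P ≤ q⁻¹ := by
    rw [lintegral_tsum fun j => (measurable_one.indicator (hmB j)).aemeasurable]
    calc ∑' j, ∫⁻ ω, (manySet ξ μ h w j).indicator 1 ω ∂P
        ≤ ∑' j, (1 - q) ^ j := ENNReal.tsum_le_tsum fun j => by
          rw [lintegral_indicator_one (hmB j)]; exact hB j
      _ = q⁻¹ := by
          rw [ENNReal.tsum_geometric, ENNReal.sub_sub_cancel ENNReal.one_ne_top hq1]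
  have hqi : q⁻¹ < ⊤ := ENNReal.inv_lt_top.2 (pos_iff_ne_zero.2 hq0)
  refine ⟨fun k hk => ?_, (lintegral_mono hNf).trans hfi, hqi, ?_⟩
  · obtain ⟨j, rfl⟩ : ∃ j, k = j + 1 := ⟨k - 1, by omega⟩
    exact (measure_mono fun ω hω => numCycles_le _ μ h w A j hω).trans (hB j)
  · filter_upwards [ae_lt_top hf (hfi.trans_lt hqi).ne] with ω hω
    have := (hNf ω).trans_lt hω
    simpa using this
end

section
/- Let (ξ_n)_{n≥1} be i.i.d. real random variables with E[ξ_1] > 0 and E[ξ_1²] < ∞, and let S_n = ∑_{k=1}^n ξ_k. Then the last exit time ν_R = sup{n ≥ 1 : S_n ≤ 0} (with sup ∅ = 0) is finite almost surely and has finite expectation: E[ν_R] < ∞. -/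
open MeasureTheory Filter Set ProbabilityTheory
open scoped ENNReal

/-- Last time `n ≥ 1` at which `P n` holds, valued in `ℕ∞` with `sup ∅ = 0`. -/
noncomputable def lastTime (P : ℕ → Prop) : ℕ∞ :=
  sSup ((↑) '' {n : ℕ | 1 ≤ n ∧ P n})

lemma wl_maximal {Ω : Type*} [MeasurableSpace Ω] (P : Measure Ω)
    [IsProbabilityMeasure P] (Z : ℕ → Ω → ℝ) (hmeas : ∀ n, Measurable (Z n))
    (hindep : iIndepFun Z P) (B : ℝ) (h0 : ∀ n ω, 0 ≤ Z n ω) (hB : ∀ n ω, Z n ω ≤ B)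
    (hm : ∀ n, ∫ ω, Z n ω ∂P = 1) (t : ℝ) (ht : 0 < t) (L : ℕ) :
    P {ω | ∃ n ≤ L, t ≤ ∏ i ∈ Finset.range (n + 1), Z i ω} ≤ ENNReal.ofReal (1 / t) := by
  have hsm : ∀ n, StronglyMeasurable (Z n) := fun n => (hmeas n).stronglyMeasurable
  have hZint : ∀ n, Integrable (Z n) P := fun n =>
    Integrable.of_bound (hsm n).aestronglyMeasurable B
      (ae_of_all _ fun ω => by rw [Real.norm_eq_abs, abs_of_nonneg (h0 n ω)]; exact hB n ω)
  set f : ℕ → Ω → ℝ := fun n ω => ∏ i ∈ Finset.range (n + 1), Z i ω with hf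
  have hfint : ∀ n, Integrable (f n) P := fun n =>
    Integrable.of_bound (Finset.measurable_prod _ fun i _ => hmeas i).aestronglyMeasurable
      (∏ i ∈ Finset.range (n + 1), B)
      (ae_of_all _ fun ω => by
        rw [Real.norm_eq_abs, abs_of_nonneg (Finset.prod_nonneg fun i _ => h0 i ω)]
        exact Finset.prod_le_prod (fun i _ => h0 i ω) (fun i _ => hB i ω))
  have hadp : StronglyAdapted (Filtration.natural Z hsm) f := by
    intro n
    refine Finset.stronglyMeasurable_fun_prod _ fun i hi => ?_
    exact (Filtration.stronglyAdapted_natural hsm i).mono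
      ((Filtration.natural Z hsm).mono (by simp at hi; omega))
  have hfs : ∀ n, f (n + 1) = f n * Z (n + 1) := by
    intro n; ext ω; simp only [hf, Pi.mul_apply]; rw [Finset.prod_range_succ]
  have hmart : Martingale f (Filtration.natural Z hsm) P := by
    refine martingale_nat hadp hfint fun n => ?_
    rw [hfs]
    have h1 := condExp_mul_of_stronglyMeasurable_left (μ := P) (hadp n)
      (by rw [← hfs]; exact hfint _) (hZint (n + 1))
    have h2 := hindep.condExp_natural_ae_eq_of_lt hsm (Nat.lt_succ_self n)
    filter_upwards [h1, h2] with ω h1 h2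
    rw [h1, Pi.mul_apply, h2, hm, mul_one]
  have hnn : 0 ≤ f := fun n ω => Finset.prod_nonneg fun i _ => h0 i ω
  have hone : ∀ n, ∫ ω, f n ω ∂P = 1 := by
    intro n
    have := hmart.setIntegral_eq (Nat.zero_le n) (MeasurableSet.univ)
    simp only [setIntegral_univ] at this
    rw [← this]
    simpa [hf] using hm 0
  have hmax := maximal_ineq hmart.submartingale hnn (ε := t.toNNReal) L
  have hcoe : ((t.toNNReal : NNReal) : ℝ) = t := Real.coe_toNNReal t ht.le
  rw [hcoe] at hmax
  have hset : {ω | ∃ n ≤ L, t ≤ ∏ i ∈ Finset.range (n + 1), Z i ω} =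
      {ω | t ≤ (Finset.range (L + 1)).sup' Finset.nonempty_range_add_one fun k => f k ω} := by
    ext ω
    simp only [mem_ofPred_eq, Finset.le_sup'_iff, Finset.mem_range, Nat.lt_succ_iff, hf]
  rw [hset]
  have h3 : (t.toNNReal : ℝ≥0∞) * P {ω | t ≤ (Finset.range (L + 1)).sup'
      Finset.nonempty_range_add_one fun k => f k ω} ≤ 1 := by
    refine hmax.trans ?_
    rw [← ENNReal.ofReal_one]
    apply ENNReal.ofReal_le_ofReal
    rw [← hone L]
    exact setIntegral_le_integral (hfint L) (ae_of_all _ fun ω => hnn L ω)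
  rw [one_div, ENNReal.ofReal_inv_of_pos ht, ← one_div]
  rw [ENNReal.le_div_iff_mul_le (Or.inl (by simpa using ht)) (Or.inl (by simp)), mul_comm]
  exact h3

lemma wl_exp (y B : ℝ) (hB : 0 ≤ B) (hy : y ≤ B) :
    Real.exp y ≤ 1 + y + y ^ 2 * Real.exp B := by
  have hE : 1 ≤ Real.exp B := Real.one_le_exp hB
  have hyB : Real.exp y ≤ Real.exp B := Real.exp_le_exp.2 hy
  rcases le_or_gt (|y|) 1 with h | h
  · have := (abs_le.1 (Real.abs_exp_sub_one_sub_id_le h)).2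
    nlinarith [sq_nonneg y]
  · rcases lt_abs.1 h with h | h
    · have h2 : 1 ≤ y ^ 2 := by nlinarith
      nlinarith [mul_nonneg (sub_nonneg.2 h2) (Real.exp_pos B).le]
    · have : Real.exp y ≤ 1 := Real.exp_le_one_iff.2 (by linarith)
      nlinarith [sq_nonneg y]

lemma wl_trunc {Ω : Type*} [MeasurableSpace Ω] (P : Measure Ω)
    [IsProbabilityMeasure P] (X : ℕ → Ω → ℝ) (hmeas : ∀ n, Measurable (X n))
    (hindep : iIndepFun X P)
    (hid : ∀ n, IdentDistrib (X n) (X 0) P P)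
    (hint : Integrable (X 0) P) (hmean : ∫ ω, X 0 ω ∂P = 0)
    (hvar : Integrable (fun ω => (X 0 ω) ^ 2) P) (m : ℝ) (hm : 0 < m) (N : ℕ) (hN : 1 ≤ N) :
    P {ω | ∃ n, n + 1 ≤ 2 * N ∧
        m * N ≤ ∑ i ∈ Finset.range (n + 1), min (X i ω) (m * N / 4)} ≤
      ENNReal.ofReal (Real.exp (128 * (∫ ω, (X 0 ω) ^ 2 ∂P) / m ^ 2) / N ^ 2) := by
  set V := ∫ ω, (X 0 ω) ^ 2 ∂P with hV
  have hV0 : 0 ≤ V := integral_nonneg fun ω => sq_nonneg _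
  have hNR : (1 : ℝ) ≤ N := by exact_mod_cast hN
  have hN0 : (0 : ℝ) < N := by linarith
  set l : ℝ := Real.log N / 4 with hl
  have hl0 : 0 ≤ l := div_nonneg (Real.log_nonneg hNR) (by norm_num)
  have hNl : Real.exp (4 * l) = N := by
    rw [hl, mul_div_cancel₀ _ (by norm_num : (4 : ℝ) ≠ 0), Real.exp_log hN0]
  set lam : ℝ := 8 * l / (m * N) with hlam
  have hlam0 : 0 ≤ lam := by positivity
  set b : ℝ := m * N / 4 with hb
  have hb0 : 0 < b := by positivity
  have hlamb : lam * b = 2 * l := by rw [hlam, hb]; field_simp; ring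
  set g : ℝ → ℝ := fun x => Real.exp (lam * min x b) with hg
  have hgm : Measurable g := by fun_prop
  have hgpos : ∀ x, 0 < g x := fun x => Real.exp_pos _
  have hgB : ∀ x, g x ≤ Real.exp (2 * l) := fun x => by
    rw [← hlamb]; exact Real.exp_le_exp.2 (by gcongr; exact min_le_right _ _)
  have hgint : Integrable (fun ω => g (X 0 ω)) P :=
    Integrable.of_bound (hgm.comp (hmeas 0)).aestronglyMeasurable (Real.exp (2 * l))
      (ae_of_all _ fun ω => by
        rw [Real.norm_eq_abs, abs_of_nonneg (hgpos _).le]; exact hgB _)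
  set M := ∫ ω, g (X 0 ω) ∂P with hM
  have hM0 : 0 < M := by
    rw [hM]
    exact integral_exp_pos (μ := P) (f := fun ω => lam * min (X 0 ω) b) hgint
  have hMn : ∀ n, ∫ ω, g (X n ω) ∂P = M := fun n => ((hid n).comp hgm).integral_eq
  set q := Real.exp (64 * V / (m ^ 2 * N)) with hq
  have hq1 : 1 ≤ q := Real.one_le_exp (by positivity)
  have hc : lam ^ 2 * Real.exp (2 * l) ≤ 64 / (m ^ 2 * N) := by
    have h1 : l ≤ Real.exp l := by linarith [Real.add_one_le_exp l]
    have h2 : l ^ 2 * Real.exp (2 * l) ≤ N := by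
      rw [← hNl]
      have : Real.exp (4 * l) = Real.exp l ^ 2 * Real.exp (2 * l) := by
        rw [← Real.exp_nat_mul, ← Real.exp_add]; congr 1; push_cast; ring
      rw [this]; gcongr
    have h3 : lam ^ 2 * Real.exp (2 * l) = 64 / (m ^ 2 * N ^ 2) * (l ^ 2 * Real.exp (2 * l)) := by
      rw [hlam]; field_simp; ring
    rw [h3]
    calc _ ≤ 64 / (m ^ 2 * N ^ 2) * (N : ℝ) := by gcongr
      _ = _ := by field_simp
  have hMq : M ≤ q := by
    have hpt : ∀ ω, g (X 0 ω) ≤ 1 + lam * X 0 ω + 64 / (m ^ 2 * N) * (X 0 ω) ^ 2 := by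
      intro ω
      set x := X 0 ω
      have h1 := wl_exp (lam * min x b) (2 * l) (by positivity)
        (by rw [← hlamb]; gcongr; exact min_le_right _ _)
      have h2 : lam * min x b ≤ lam * x := by gcongr; exact min_le_left _ _
      have h3 : (min x b) ^ 2 ≤ x ^ 2 := by
        rcases le_total x b with h | h
        · rw [min_eq_left h]
        · rw [min_eq_right h]; gcongr
      have h4 : (lam * min x b) ^ 2 * Real.exp (2 * l) ≤ 64 / (m ^ 2 * N) * x ^ 2 := by
        calc _ = (lam ^ 2 * Real.exp (2 * l)) * (min x b) ^ 2 := by ring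
          _ ≤ _ := by gcongr
      simp only [hg]; linarith
    have hi1 : Integrable (fun ω => 1 + lam * X 0 ω) P :=
      (integrable_const _).add (hint.const_mul _)
    have hi2 : Integrable (fun ω => 64 / (m ^ 2 * N) * (X 0 ω) ^ 2) P := hvar.const_mul _
    have : M ≤ ∫ ω, (1 + lam * X 0 ω + 64 / (m ^ 2 * N) * (X 0 ω) ^ 2) ∂P :=
      integral_mono hgint (hi1.add hi2) hpt
    rw [integral_add hi1 hi2, integral_add (integrable_const _) (hint.const_mul _),
      integral_const_mul, integral_const_mul, hmean] at this
    simp only [integral_const, probReal_univ, smul_eq_mul, mul_one, mul_zero, add_zero] at this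
    rw [← hV] at this
    have h5 := Real.add_one_le_exp (64 * V / (m ^ 2 * N))
    have h6 : 64 / (m ^ 2 * N) * V = 64 * V / (m ^ 2 * N) := by ring
    rw [hq]; linarith
  set t := (N : ℝ) ^ 2 / q ^ (2 * N) with ht
  have hq0 : 0 < q := by linarith
  have ht0 : 0 < t := by positivity
  have hgm' : Measurable (fun x => g x / M) := hgm.div_const _
  have key := wl_maximal P (fun n ω => g (X n ω) / M) (fun n => hgm'.comp (hmeas n))
    (hindep.comp (fun _ x => g x / M) (fun _ => hgm')) (Real.exp (2 * l) / M)
    (fun n ω => (div_pos (hgpos _) hM0).le)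
    (fun n ω => by have := hgB (X n ω); gcongr)
    (fun n => by rw [integral_div, hMn, div_self hM0.ne']) t ht0 (2 * N)
  have h1t : 1 / t = Real.exp (128 * V / m ^ 2) / N ^ 2 := by
    have : q ^ (2 * N) = Real.exp (128 * V / m ^ 2) := by
      rw [hq, ← Real.exp_nat_mul]; congr 1; push_cast; field_simp; ring
    rw [ht, this, one_div_div]
  rw [h1t] at key
  refine (measure_mono ?_).trans key
  rintro ω ⟨n, hn, hs⟩
  refine ⟨n, by omega, ?_⟩
  rw [Finset.prod_div_distrib, Finset.prod_const, Finset.card_range]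
  have hprod : ∏ i ∈ Finset.range (n + 1), g (X i ω) =
      Real.exp (lam * ∑ i ∈ Finset.range (n + 1), min (X i ω) b) := by
    rw [Finset.mul_sum, Real.exp_sum]
  rw [hprod, ht]
  have hnum : (N : ℝ) ^ 2 ≤ Real.exp (lam * ∑ i ∈ Finset.range (n + 1), min (X i ω) b) := by
    have : (N : ℝ) ^ 2 = Real.exp (lam * (m * N)) := by
      rw [← hNl, ← Real.exp_nat_mul, hNl]; congr 1; rw [hlam]; field_simp; ring
    rw [this]; gcongr
  have hden : M ^ (n + 1) ≤ q ^ (2 * N) :=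
    (pow_le_pow_left₀ hM0.le hMq _).trans (pow_le_pow_right₀ hq1 hn)
  gcongr

lemma wl_geom (w : ℝ) (hw : 0 ≤ w) :
    ∑' k : ℕ, (if (4 : ℝ) ^ k < w then (4 : ℝ≥0∞) ^ k else 0) ≤ ENNReal.ofReal (2 * w) := by
  have hfin : ∀ n : ℕ, ∑ k ∈ Finset.range n, (if (4 : ℝ) ^ k < w then (4 : ℝ) ^ k else 0)
      ≤ 2 * w := by
    intro n
    induction n with
    | zero => simpa using hw
    | succ n ih =>
      by_cases h : (4 : ℝ) ^ n < w
      · calc _ ≤ ∑ k ∈ Finset.range (n + 1), (4 : ℝ) ^ k :=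
              Finset.sum_le_sum fun k _ => by split_ifs <;> simp
          _ ≤ 2 * (4 : ℝ) ^ n := by
              rw [geom_sum_eq (by norm_num), pow_succ]
              have : (0 : ℝ) < 4 ^ n := by positivity
              linarith
          _ ≤ _ := by linarith
      · rw [Finset.sum_range_succ, if_neg h, add_zero]; exact ih
  rw [ENNReal.tsum_eq_iSup_nat]
  refine iSup_le fun n => ?_
  refine le_trans (le_of_eq ?_) (ENNReal.ofReal_le_ofReal (hfin n))
  rw [ENNReal.ofReal_sum_of_nonneg (fun k _ => by split_ifs <;> positivity)]
  refine Finset.sum_congr rfl fun k _ => ?_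
  split_ifs
  · rw [ENNReal.ofReal_pow (by norm_num)]; simp
  · simp

lemma wl_tail {Ω : Type*} [MeasurableSpace Ω] (P : Measure Ω)
    [IsProbabilityMeasure P] (X : Ω → ℝ) (hmeas : Measurable X)
    (hvar : Integrable (fun ω => (X ω) ^ 2) P) (d : ℝ) (hd : 0 < d) :
    ∑' k : ℕ, (4 : ℝ≥0∞) ^ k * P {ω | d * 2 ^ k < X ω} < ⊤ := by
  have hms : ∀ k : ℕ, MeasurableSet {ω | d * 2 ^ k < X ω} := fun k =>
    measurableSet_lt measurable_const hmeas
  have h1 : ∀ k : ℕ, (4 : ℝ≥0∞) ^ k * P {ω | d * 2 ^ k < X ω} =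
      ∫⁻ ω, {ω | d * 2 ^ k < X ω}.indicator (fun _ => (4 : ℝ≥0∞) ^ k) ω ∂P := fun k => by
    rw [lintegral_indicator_const (hms k)]
  simp_rw [h1]
  rw [← lintegral_tsum fun k => (measurable_const.indicator (hms k)).aemeasurable]
  have hi : Integrable (fun ω => 2 * ((X ω) ^ 2 / d ^ 2)) P := (hvar.div_const _).const_mul _
  refine lt_of_le_of_lt (lintegral_mono fun ω => ?_) hi.lintegral_lt_top
  refine le_trans (ENNReal.tsum_le_tsum fun k => ?_) (wl_geom ((X ω) ^ 2 / d ^ 2) (by positivity))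
  by_cases h : d * 2 ^ k < X ω
  · have : (4 : ℝ) ^ k < (X ω) ^ 2 / d ^ 2 := by
      rw [lt_div_iff₀ (by positivity)]
      have h4 : (4 : ℝ) ^ k * d ^ 2 = (d * 2 ^ k) ^ 2 := by
        rw [show (4 : ℝ) = 2 ^ 2 by norm_num, ← pow_mul]; ring
      rw [h4]; gcongr
    rw [if_pos this, indicator_of_mem (by exact h)]
  · rw [indicator_of_notMem (by exact h)]; exact zero_le

/-- For i.i.d. increments with positive mean and finite second moment, the last exit time
`ν_R = sup{n ≥ 1 : S_n ≤ 0}` of the random walk is finite almost surely and has finite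
expectation. -/
theorem walk_lastExit_integrable {Ω : Type*} [MeasurableSpace Ω] (P : Measure Ω)
    [IsProbabilityMeasure P] (ξ : ℕ → Ω → ℝ) (hmeas : ∀ n, Measurable (ξ n))
    (hindep : iIndepFun ξ P)
    (hid : ∀ n, IdentDistrib (ξ n) (ξ 0) P P)
    (hint : Integrable (ξ 0) P) (hmean : 0 < ∫ ω, ξ 0 ω ∂P)
    (hvar : Integrable (fun ω => (ξ 0 ω) ^ 2) P) :
    (∀ᵐ ω ∂P, lastTime (fun n => psum (fun k => ξ k ω) n ≤ 0) < ⊤) ∧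
      ∫⁻ ω, (lastTime (fun n => psum (fun k => ξ k ω) n ≤ 0) : ℝ≥0∞) ∂P < ⊤ := by
  set m := ∫ ω, ξ 0 ω ∂P with hm
  set X : ℕ → Ω → ℝ := fun n ω => m - ξ n ω with hX
  have hXm : ∀ n, Measurable (X n) := fun n => measurable_const.sub (hmeas n)
  have hsub : Measurable (fun x : ℝ => m - x) := by fun_prop
  have hXi : iIndepFun X P := hindep.comp (fun _ x => m - x) (fun _ => hsub)
  have hXid : ∀ n, IdentDistrib (X n) (X 0) P P := fun n => (hid n).comp hsub
  have hXint : Integrable (X 0) P := (integrable_const _).sub hint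
  have hXmean : ∫ ω, X 0 ω ∂P = 0 := by
    simp only [hX]
    rw [integral_sub (integrable_const _) hint]
    simp [hm]
  have hXvar : Integrable (fun ω => (X 0 ω) ^ 2) P := by
    have : (fun ω => (X 0 ω) ^ 2) = fun ω => (m ^ 2 - 2 * m * ξ 0 ω) + (ξ 0 ω) ^ 2 := by
      ext ω; simp only [hX]; ring
    rw [this]
    exact ((integrable_const _).sub (hint.const_mul _)).add hvar
  set C : ℝ := Real.exp (128 * (∫ ω, (X 0 ω) ^ 2 ∂P) / m ^ 2) with hC
  set A : ℕ → Set Ω := fun k =>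
    {ω | ∃ n, 2 ^ k ≤ n ∧ n < 2 ^ (k + 1) ∧ psum (fun j => ξ j ω) n ≤ 0} with hA
  have hpsm : ∀ n, Measurable (fun ω => psum (fun j => ξ j ω) n) := fun n =>
    Finset.measurable_sum _ fun i _ => hmeas i
  have hAm : ∀ k, MeasurableSet (A k) := by
    intro k
    have : A k = ⋃ n, {ω | 2 ^ k ≤ n ∧ n < 2 ^ (k + 1) ∧ psum (fun j => ξ j ω) n ≤ 0} := by
      ext ω; simp [hA]
    rw [this]
    refine MeasurableSet.iUnion fun n => ?_
    exact (MeasurableSet.const _).inter ((MeasurableSet.const _).inter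
      (measurableSet_le (hpsm n) measurable_const))
  have hPA : ∀ k, P (A k) ≤ 2 * 2 ^ k * P {ω | m / 4 * 2 ^ k < X 0 ω} +
      ENNReal.ofReal (C / ((2 ^ k : ℕ) : ℝ) ^ 2) := by
    intro k
    have hN : 1 ≤ 2 ^ k := Nat.one_le_two_pow
    have htr := wl_trunc P X hXm hXi hXid hXint hXmean hXvar m hmean (2 ^ k) hN
    have hsubset : A k ⊆ (⋃ i ∈ Finset.range (2 * 2 ^ k), {ω | m / 4 * 2 ^ k < X i ω}) ∪
        {ω | ∃ n, n + 1 ≤ 2 * 2 ^ k ∧ m * ((2 ^ k : ℕ) : ℝ) ≤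
          ∑ i ∈ Finset.range (n + 1), min (X i ω) (m * ((2 ^ k : ℕ) : ℝ) / 4)} := by
      rintro ω ⟨n, hn1, hn2, hn3⟩
      by_cases hbig : ∃ i < 2 * 2 ^ k, m / 4 * 2 ^ k < X i ω
      · left
        simpa using hbig
      · right
        push Not at hbig
        rw [pow_succ] at hn2
        refine ⟨n - 1, by omega, ?_⟩
        rw [Nat.sub_add_cancel (by omega)]
        have h1 : ∑ i ∈ Finset.range n, min (X i ω) (m * ((2 ^ k : ℕ) : ℝ) / 4) =
            ∑ i ∈ Finset.range n, X i ω := by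
          refine Finset.sum_congr rfl fun i hi => min_eq_left ?_
          have := hbig i (by simp at hi; omega)
          push_cast
          linarith
        have h2 : ∑ i ∈ Finset.range n, X i ω = n * m - psum (fun j => ξ j ω) n := by
          simp [hX, psum, Finset.sum_sub_distrib]
        rw [h1, h2]
        have h3 : ((2 ^ k : ℕ) : ℝ) ≤ n := by exact_mod_cast hn1
        nlinarith
    refine (measure_mono hsubset).trans ((measure_union_le _ _).trans (add_le_add ?_ htr))
    refine (measure_biUnion_finset_le _ _).trans (le_of_eq ?_)
    have : ∀ i ∈ Finset.range (2 * 2 ^ k), P {ω | m / 4 * 2 ^ k < X i ω} =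
        P {ω | m / 4 * 2 ^ k < X 0 ω} := fun i _ =>
      (hXid i).measure_mem_eq (s := Ioi (m / 4 * 2 ^ k)) measurableSet_Ioi
    rw [Finset.sum_congr rfl this]
    simp
  set D : Ω → ℝ≥0∞ := fun ω => ∑' k, (A k).indicator (fun _ => (2 : ℝ≥0∞) ^ (k + 1)) ω with hD
  have hDm : Measurable D := Measurable.tsum fun k => measurable_const.indicator (hAm k)
  have hle : ∀ ω, (lastTime (fun n => psum (fun k => ξ k ω) n ≤ 0) : ℝ≥0∞) ≤ D ω := by
    intro ω
    have key : ∀ n : ℕ, 1 ≤ n → psum (fun k => ξ k ω) n ≤ 0 → (n : ℝ≥0∞) ≤ D ω := by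
      intro n hn hS
      have hlo : 2 ^ Nat.log 2 n ≤ n := Nat.pow_log_le_self 2 (by omega)
      have hhi : n < 2 ^ (Nat.log 2 n + 1) := Nat.lt_pow_succ_log_self (by norm_num) n
      have hmem : ω ∈ A (Nat.log 2 n) := ⟨n, hlo, hhi, hS⟩
      refine le_trans ?_ (ENNReal.le_tsum (Nat.log 2 n))
      rw [indicator_of_mem hmem]
      exact_mod_cast hhi.le
    by_cases hDt : D ω = ⊤
    · rw [hDt]; exact le_top
    · have hfl : lastTime (fun n => psum (fun k => ξ k ω) n ≤ 0) ≤
          ((⌊(D ω).toReal⌋₊ : ℕ) : ℕ∞) := by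
        refine sSup_le ?_
        rintro _ ⟨n, ⟨hn, hS⟩, rfl⟩
        have h1 := key n hn hS
        have h2 : (n : ℝ) ≤ (D ω).toReal := by
          have := ENNReal.toReal_mono hDt h1
          simpa using this
        exact_mod_cast Nat.le_floor h2
      calc (lastTime (fun n => psum (fun k => ξ k ω) n ≤ 0) : ℝ≥0∞)
          ≤ (((⌊(D ω).toReal⌋₊ : ℕ) : ℕ∞) : ℝ≥0∞) := ENat.toENNReal_mono hfl
        _ = ENNReal.ofReal (⌊(D ω).toReal⌋₊ : ℝ) := by simp
        _ ≤ ENNReal.ofReal (D ω).toReal :=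
            ENNReal.ofReal_le_ofReal (Nat.floor_le ENNReal.toReal_nonneg)
        _ = D ω := ENNReal.ofReal_toReal hDt
  have hDint : ∫⁻ ω, D ω ∂P < ⊤ := by
    simp only [hD]
    rw [lintegral_tsum fun k => (measurable_const.indicator (hAm k)).aemeasurable]
    have hb : ∀ k, ∫⁻ ω, (A k).indicator (fun _ => (2 : ℝ≥0∞) ^ (k + 1)) ω ∂P ≤
        4 * ((4 : ℝ≥0∞) ^ k * P {ω | m / 4 * 2 ^ k < X 0 ω}) +
          ENNReal.ofReal (2 * C * (1 / 2) ^ k) := by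
      intro k
      rw [lintegral_indicator_const (hAm k)]
      refine (mul_le_mul_right (hPA k) _).trans (le_of_eq ?_)
      rw [mul_add]
      congr 1
      · rw [show (4 : ℝ≥0∞) = 2 * 2 by norm_num, mul_pow]; ring
      · rw [show (2 : ℝ≥0∞) ^ (k + 1) = ENNReal.ofReal (2 ^ (k + 1)) by
          rw [ENNReal.ofReal_pow (by norm_num)]; simp,
          ← ENNReal.ofReal_mul (by positivity)]
        congr 1
        push_cast
        rw [one_div, inv_pow]
        field_simp
        ring
    refine lt_of_le_of_lt (ENNReal.tsum_le_tsum hb) ?_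
    rw [ENNReal.tsum_add, ENNReal.tsum_mul_left]
    refine ENNReal.add_lt_top.2 ⟨ENNReal.mul_lt_top (by simp)
      (wl_tail P (X 0) (hXm 0) hXvar (m / 4) (by positivity)), ?_⟩
    have hsum : Summable fun k : ℕ => 2 * C * (1 / 2 : ℝ) ^ k := summable_geometric_two.mul_left _
    exact hsum.tsum_ofReal_lt_top
  refine ⟨?_, lt_of_le_of_lt (lintegral_mono hle) hDint⟩
  filter_upwards [ae_lt_top hDm hDint.ne] with ω hω
  have := lt_of_le_of_lt (hle ω) hω
  simpa using this
end

section
/- Let (ξ_n)_{n≥1} be i.i.d. integrable real random variables with E[ξ_1] = −d for some d > 0, and let μ > 0. Let (W_n)_{n≥0} be the DE-CuSum sequence with h = ∞ started at 0, i.e., W_0 = 0 and W_{n+1} = W_n + ξ_{n+1} if W_n ≥ 0, W_{n+1} = min(W_n + μ, 0) if W_n < 0. Then the pre-change duty cycle satisfies limsup_{γ→∞} (1/γ) E[#{1 ≤ k ≤ γ−1 : W_{k−1} ≥ 0}] ≤ μ/(μ + d). -/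
open MeasureTheory Filter Set ProbabilityTheory
open scoped ENNReal

/-- DE-CuSum sequence with `h = ∞` and parameter `μ > 0`, started at `0`:
`W_{n+1} = min (W_n + μ) 0` if `W_n < 0`, and `W_{n+1} = W_n + ξ_{n+1}` if `W_n ≥ 0`. -/
noncomputable def deCusumInf (ξ : ℕ → ℝ) (μ : ℝ) : ℕ → ℝ
  | 0 => 0
  | n + 1 =>
    if deCusumInf ξ μ n < 0 then min (deCusumInf ξ μ n + μ) 0
    else deCusumInf ξ μ n + ξ n

lemma deCusum_lower (x : ℕ → ℝ) (μ K : ℝ) (hμ : 0 < μ) (hK : 0 ≤ K) (n : ℕ) :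
    -K - ∑ k ∈ Finset.range n, max (|x k| - K) 0 ≤ deCusumInf x μ n := by
  induction n with
  | zero => simp [deCusumInf, hK]
  | succ n ih =>
    have hs : 0 ≤ ∑ k ∈ Finset.range n, max (|x k| - K) 0 :=
      Finset.sum_nonneg fun _ _ => le_max_right _ _
    have h1 := le_max_left (|x n| - K) 0
    have h2 := le_max_right (|x n| - K) 0
    have h3 := neg_abs_le (x n)
    rw [Finset.sum_range_succ, deCusumInf]
    split_ifs with h
    · exact le_min (by linarith) (by linarith)
    · linarith

/-- Indicator of sampling. -/
noncomputable def smp (x : ℕ → ℝ) (μ : ℝ) (j : ℕ) : ℝ :=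
  if 0 ≤ deCusumInf x μ j then 1 else 0

lemma deCusum_upper (x : ℕ → ℝ) (μ : ℝ) (n : ℕ) :
    deCusumInf x μ n ≤ ∑ j ∈ Finset.range n, (μ - μ * smp x μ j + smp x μ j * x j) := by
  induction n with
  | zero => simp [deCusumInf]
  | succ n ih =>
    rw [Finset.sum_range_succ, deCusumInf]
    unfold smp at *
    split_ifs with h h' h'
    · linarith
    · have := min_le_left (deCusumInf x μ n + μ) 0
      linarith
    · linarith
    · linarith

lemma encard_eq_smp (x : ℕ → ℝ) (μ : ℝ) (n : ℕ) :
    ((Set.encard {j : ℕ | j < n ∧ 0 ≤ deCusumInf x μ j} : ℕ∞) : ℝ≥0∞) =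
      ENNReal.ofReal (∑ j ∈ Finset.range n, smp x μ j) := by
  classical
  have : {j : ℕ | j < n ∧ 0 ≤ deCusumInf x μ j} =
      (((Finset.range n).filter fun j => 0 ≤ deCusumInf x μ j : Finset ℕ) : Set ℕ) := by
    ext j; simp
  rw [this, Set.encard_coe_eq_coe_finsetCard]
  unfold smp
  rw [Finset.sum_boole]
  simp

lemma deCusum_meas {Ω : Type*} (m : MeasurableSpace Ω) (ξ : ℕ → Ω → ℝ) (μ : ℝ) (n : ℕ)
    (h : ∀ i < n, Measurable[m] (ξ i)) :
    Measurable[m] fun ω => deCusumInf (fun k => ξ k ω) μ n := by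
  induction n with
  | zero => simp only [deCusumInf]; exact measurable_const
  | succ n ih =>
    have ih' := ih fun i hi => h i (by omega)
    simp only [deCusumInf]
    refine Measurable.ite (measurableSet_lt ih' measurable_const) ?_ ?_
    · exact (ih'.add_const μ).min measurable_const
    · exact ih'.add (h n (by omega))

lemma smp_meas {Ω : Type*} (m : MeasurableSpace Ω) (ξ : ℕ → Ω → ℝ) (μ : ℝ) (n : ℕ)
    (h : ∀ i < n, Measurable[m] (ξ i)) :
    Measurable[m] fun ω => smp (fun k => ξ k ω) μ n := by
  unfold smp
  exact Measurable.ite (measurableSet_le measurable_const (deCusum_meas m ξ μ n h))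
    measurable_const measurable_const

lemma smp_nonneg (x : ℕ → ℝ) (μ : ℝ) (j : ℕ) : 0 ≤ smp x μ j := by
  unfold smp; split_ifs <;> norm_num

lemma smp_le_one (x : ℕ → ℝ) (μ : ℝ) (j : ℕ) : smp x μ j ≤ 1 := by
  unfold smp; split_ifs <;> norm_num

lemma smp_indep {Ω : Type*} [MeasurableSpace Ω] (P : Measure Ω)
    (ξ : ℕ → Ω → ℝ) (hmeas : ∀ n, Measurable (ξ n))
    (hindep : iIndepFun ξ P) (μ : ℝ) (n : ℕ) :
    IndepFun (fun ω => smp (fun k => ξ k ω) μ n) (ξ n) P := by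
  have h := indep_iSup_of_disjoint (S := {i | i < n}) (T := {n})
    (fun i => (hmeas i).comap_le) hindep (by simp)
  rw [IndepFun_iff_Indep]
  refine indep_of_indep_of_le_left (indep_of_indep_of_le_right h ?_) ?_
  · exact le_iSup₂_of_le n (by simp) le_rfl
  · rw [← measurable_iff_comap_le]
    refine smp_meas _ ξ μ n fun i hi => ?_
    rw [measurable_iff_comap_le]
    exact le_iSup₂_of_le (f := fun i (_ : i ∈ {i | i < n}) => MeasurableSpace.comap (ξ i) _)
      i hi le_rfl

lemma main_bound {Ω : Type*} [MeasurableSpace Ω] (P : Measure Ω)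
    [IsProbabilityMeasure P] (ξ : ℕ → Ω → ℝ) (hmeas : ∀ n, Measurable (ξ n))
    (hindep : iIndepFun ξ P)
    (hid : ∀ n, IdentDistrib (ξ n) (ξ 0) P P)
    (hint : Integrable (ξ 0) P)
    (d μ : ℝ) (hμ : 0 < μ) (hmean : ∫ ω, ξ 0 ω ∂P = -d)
    (K : ℝ) (hK : 0 ≤ K) (n : ℕ) :
    Integrable (fun ω => ∑ j ∈ Finset.range n, smp (fun k => ξ k ω) μ j) P ∧
    (μ + d) * ∫ ω, ∑ j ∈ Finset.range n, smp (fun k => ξ k ω) μ j ∂P ≤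
      K + n * (μ + ∫ ω, max (|ξ 0 ω| - K) 0 ∂P) := by
  have hi : ∀ n, Integrable (ξ n) P := fun n => (hid n).integrable_iff.2 hint
  have hsm : ∀ j, Measurable fun ω => smp (fun k => ξ k ω) μ j :=
    fun j => smp_meas _ ξ μ j fun i _ => hmeas i
  have hs : ∀ j, Integrable (fun ω => smp (fun k => ξ k ω) μ j) P := fun j =>
    Integrable.of_bound (hsm j).aestronglyMeasurable 1 (ae_of_all _ fun ω => by
      rw [Real.norm_of_nonneg (smp_nonneg _ _ _)]; exact smp_le_one _ _ _)
  have hsx : ∀ j, Integrable (fun ω => smp (fun k => ξ k ω) μ j * ξ j ω) P := fun j =>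
    (smp_indep P ξ hmeas hindep μ j).integrable_mul (hs j) (hi j)
  have hsxe : ∀ j, ∫ ω, smp (fun k => ξ k ω) μ j * ξ j ω ∂P =
      (∫ ω, smp (fun k => ξ k ω) μ j ∂P) * (-d) := fun j => by
    rw [(smp_indep P ξ hmeas hindep μ j).integral_fun_mul_eq_mul_integral
      (hsm j).aestronglyMeasurable (hmeas j).aestronglyMeasurable, (hid j).integral_eq, hmean]
  have hb : ∀ j, Integrable (fun ω => max (|ξ j ω| - K) 0) P := fun j =>
    ((hi j).abs.sub (integrable_const K)).pos_part
  have hbe : ∀ j, ∫ ω, max (|ξ j ω| - K) 0 ∂P = ∫ ω, max (|ξ 0 ω| - K) 0 ∂P := fun j =>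
    ((hid j).comp (u := fun x : ℝ => max (|x| - K) 0) (by fun_prop)).integral_eq
  have hS := integrable_finsetSum (Finset.range n) fun j _ => hs j
  refine ⟨hS, ?_⟩
  have hterm : ∀ j, Integrable (fun ω => μ - μ * smp (fun k => ξ k ω) μ j
      + smp (fun k => ξ k ω) μ j * ξ j ω) P := fun j =>
    ((integrable_const μ).sub ((hs j).const_mul μ)).add (hsx j)
  have key : ∫ ω, (-K - ∑ k ∈ Finset.range n, max (|ξ k ω| - K) 0) ∂P ≤
      ∫ ω, ∑ j ∈ Finset.range n, (μ - μ * smp (fun k => ξ k ω) μ j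
        + smp (fun k => ξ k ω) μ j * ξ j ω) ∂P := by
    refine integral_mono ((integrable_const _).sub
      (integrable_finsetSum _ fun j _ => hb j)) (integrable_finsetSum _ fun j _ => hterm j) ?_
    intro ω
    exact (deCusum_lower (fun k => ξ k ω) μ K hμ hK n).trans (deCusum_upper _ μ n)
  rw [integral_sub (integrable_const _) (integrable_finsetSum _ fun j _ => hb j),
    integral_finsetSum _ (fun j _ => hb j), integral_finsetSum _ (fun j _ => hterm j)] at key
  have e : ∀ j, ∫ ω, (μ - μ * smp (fun k => ξ k ω) μ j
        + smp (fun k => ξ k ω) μ j * ξ j ω) ∂P =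
      μ - (μ + d) * ∫ ω, smp (fun k => ξ k ω) μ j ∂P := fun j => by
    have h0 : Integrable (fun ω => μ - μ * smp (fun k => ξ k ω) μ j) P :=
      (integrable_const μ).sub ((hs j).const_mul μ)
    rw [integral_add h0 (hsx j),
      integral_sub (integrable_const μ) ((hs j).const_mul μ), hsxe, integral_const_mul]
    simp; ring
  simp only [e, hbe] at key
  rw [integral_finsetSum _ (fun j _ => hs j)]
  simp only [Finset.sum_sub_distrib, ← Finset.mul_sum] at key
  simp at key
  linarith

lemma tail_tendsto {Ω : Type*} [MeasurableSpace Ω] (P : Measure Ω)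
    (X : Ω → ℝ) (hX : Integrable X P) :
    Tendsto (fun K : ℕ => ∫ ω, max (|X ω| - K) 0 ∂P) atTop (nhds 0) := by
  have := tendsto_integral_of_dominated_convergence (μ := P)
    (F := fun (K : ℕ) ω => max (|X ω| - K) 0) (f := fun _ => (0 : ℝ)) (fun ω => |X ω|)
    (fun K => by have := hX.aestronglyMeasurable.aemeasurable
                 exact AEMeasurable.aestronglyMeasurable (by fun_prop))
    hX.abs
    (fun K => ae_of_all _ fun ω => by
      rw [Real.norm_of_nonneg (le_max_right _ _)]
      have : (0 : ℝ) ≤ K := by positivity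
      exact max_le (by linarith) (abs_nonneg _))
    (ae_of_all _ fun ω => by
      refine tendsto_const_nhds.congr' ?_
      obtain ⟨N, hN⟩ := exists_nat_ge |X ω|
      filter_upwards [eventually_ge_atTop N] with K hK
      have : (N : ℝ) ≤ K := by exact_mod_cast hK
      rw [max_eq_right]; linarith)
  simpa using this

/-- For i.i.d. integrable increments with mean `-d < 0`, the pre-change duty cycle of the
DE-CuSum scheme with `h = ∞` (the sample at time `k` being taken iff `W_{k-1} ≥ 0`) satisfies
`limsup_{γ→∞} (1/γ) E[#{1 ≤ k ≤ γ-1 : W_{k-1} ≥ 0}] ≤ μ/(μ+d)`. -/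
theorem pdc_deCusumInf_le {Ω : Type*} [MeasurableSpace Ω] (P : Measure Ω)
    [IsProbabilityMeasure P] (ξ : ℕ → Ω → ℝ) (hmeas : ∀ n, Measurable (ξ n))
    (hindep : iIndepFun ξ P)
    (hid : ∀ n, IdentDistrib (ξ n) (ξ 0) P P)
    (hint : Integrable (ξ 0) P)
    (d μ : ℝ) (hd : 0 < d) (hμ : 0 < μ) (hmean : ∫ ω, ξ 0 ω ∂P = -d) :
    Filter.limsup (fun γ : ℕ =>
        (∫⁻ ω, (Set.encard {j : ℕ | j < γ - 1 ∧
          0 ≤ deCusumInf (fun k => ξ k ω) μ j} : ℝ≥0∞) ∂P) / (γ : ℝ≥0∞)) Filter.atTop ≤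
      ENNReal.ofReal (μ / (μ + d)) := by
  have hmd : 0 < μ + d := by linarith
  set a : ℕ → ℝ := fun K => ∫ ω, max (|ξ 0 ω| - K) 0 ∂P with ha
  have hlim : Tendsto (fun K : ℕ => ENNReal.ofReal ((μ + a K) / (μ + d))) atTop
      (nhds (ENNReal.ofReal (μ / (μ + d)))) := by
    refine ENNReal.tendsto_ofReal ?_
    simpa using ((tail_tendsto P (ξ 0) hint).const_add μ).div_const (μ + d)
  refine ge_of_tendsto' hlim fun K => ?_
  have ha0 : 0 ≤ a K := integral_nonneg fun ω => le_max_right _ _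
  have hlim2 : Tendsto (fun γ : ℕ => ENNReal.ofReal ((K / (μ + d)) / γ + (μ + a K) / (μ + d)))
      atTop (nhds (ENNReal.ofReal ((μ + a K) / (μ + d)))) := by
    refine ENNReal.tendsto_ofReal ?_
    simpa using (tendsto_const_div_atTop_nhds_zero_nat ((K : ℝ) / (μ + d))).add_const
      ((μ + a K) / (μ + d))
  rw [← hlim2.limsup_eq]
  refine limsup_le_limsup ?_
  filter_upwards [eventually_gt_atTop 0] with γ hγ
  have hγ' : (0 : ℝ) < γ := by exact_mod_cast hγ
  obtain ⟨h1, h2⟩ := main_bound P ξ hmeas hindep hid hint d μ hμ hmean K (by positivity) (γ - 1)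
  simp only [encard_eq_smp]
  rw [← ofReal_integral_eq_lintegral_ofReal h1
    (ae_of_all _ fun ω => Finset.sum_nonneg fun j _ => smp_nonneg _ _ _),
    ← ENNReal.ofReal_natCast, ← ENNReal.ofReal_div_of_pos hγ']
  refine ENNReal.ofReal_le_ofReal ?_
  have h3 : ((γ - 1 : ℕ) : ℝ) ≤ γ := by exact_mod_cast Nat.sub_le _ _
  have h4 : ((γ - 1 : ℕ) : ℝ) * (μ + a K) ≤ γ * (μ + a K) := by gcongr
  rw [div_le_iff₀ hγ', add_mul, div_mul_cancel₀ _ hγ'.ne', div_mul_eq_mul_div, ← add_div,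
    le_div_iff₀ hmd]
  simp only [ha] at h4 ⊢
  linarith
end

section
/- Let (ξ_n)_{n≥1} be i.i.d. integrable real random variables with E[ξ_1] < 0, let μ > 0 and h ∈ [0,∞), and let (W_n)_{n≥0} be the DE-CuSum sequence started at 0. Let τ_− = inf{n ≥ 1 : S_n < 0} (finite a.s. since the walk has negative drift) and let the truncated ladder height be max(S_{τ_−}, −h). Then the pre-change duty cycle satisfies limsup_{γ→∞} (1/γ) E[#{1 ≤ k ≤ γ−1 : W_{k−1} ≥ 0}] = E[τ_−] / ( E[τ_−] + E[⌈ −max(S_{τ_−}, −h) / μ ⌉] ). In particular the pre-change duty cycle does not depend on any detection threshold. -/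
open MeasureTheory Filter Set ProbabilityTheory
open scoped ENNReal

noncomputable def hit (w : ℝ) (x : ℕ → ℝ) : ℕ := sInf {n : ℕ | 1 ≤ n ∧ w + psum x n < 0}

noncomputable def offC (μ h w : ℝ) (x : ℕ → ℝ) : ℕ :=
  ⌈-max (w + psum x (hit w x)) (-h) / μ⌉₊

def shf (t : ℕ) (x : ℕ → ℝ) : ℕ → ℝ := fun k => x (t + k)

def Fin' (w : ℝ) (x : ℕ → ℝ) : Prop := ∃ n : ℕ, 1 ≤ n ∧ w + psum x n < 0

def Rg (μ h : ℝ) (x : ℕ → ℝ) : ℕ → Prop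
  | 0 => True
  | n + 1 => 0 ≤ deCusum x μ h 0 (n+1) ∧
      (deCusum x μ h 0 n < 0 ∨ deCusum x μ h 0 n + x n < 0)

lemma psum_succ_shf (x : ℕ → ℝ) (n : ℕ) : psum x (n+1) = x 0 + psum (shf 1 x) n := by
  simp only [psum, shf, Finset.sum_range_succ', add_comm 1]
  ring

lemma psum_zero' (x : ℕ → ℝ) : psum x 0 = 0 := by simp [psum]
lemma psum_one' (x : ℕ → ℝ) : psum x 1 = x 0 := by simp [psum]

lemma hit_of_neg (w : ℝ) (x : ℕ → ℝ) (hw : w + x 0 < 0) : hit w x = 1 := by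
  have h1 : (1:ℕ) ∈ {n : ℕ | 1 ≤ n ∧ w + psum x n < 0} := by simp [psum_one', hw]
  have h2 := Nat.sInf_mem ⟨1, h1⟩
  have h3 := Nat.sInf_le h1
  unfold hit
  exact le_antisymm h3 h2.1

lemma hit_pos (w : ℝ) (x : ℕ → ℝ) (hf : Fin' w x) : 1 ≤ hit w x :=
  (Nat.sInf_mem (s := {n : ℕ | 1 ≤ n ∧ w + psum x n < 0}) hf).1

lemma fin_shift (w : ℝ) (x : ℕ → ℝ) (hw : 0 ≤ w + x 0) (hf : Fin' w x) :
    Fin' (w + x 0) (shf 1 x) := by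
  obtain ⟨n, hn, h⟩ := hf
  obtain ⟨m, rfl⟩ : ∃ m, n = m + 1 := ⟨n - 1, by omega⟩
  rw [psum_succ_shf] at h
  refine ⟨m, ?_, by linarith⟩
  by_contra hm
  have : m = 0 := by omega
  subst this
  rw [psum_zero'] at h
  linarith

lemma hit_shift (w : ℝ) (x : ℕ → ℝ) (hw : 0 ≤ w + x 0) (hf : Fin' w x) :
    hit w x = hit (w + x 0) (shf 1 x) + 1 := by
  have hf' := fin_shift w x hw hf
  have a := Nat.sInf_mem (s := {n : ℕ | 1 ≤ n ∧ w + psum x n < 0}) hf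
  have b := Nat.sInf_mem (s := {n : ℕ | 1 ≤ n ∧ (w + x 0) + psum (shf 1 x) n < 0}) hf'
  change 1 ≤ hit w x ∧ w + psum x (hit w x) < 0 at a
  change 1 ≤ hit (w + x 0) (shf 1 x) ∧
    w + x 0 + psum (shf 1 x) (hit (w + x 0) (shf 1 x)) < 0 at b
  apply le_antisymm
  · apply Nat.sInf_le
    refine ⟨by omega, ?_⟩
    rw [psum_succ_shf]; linarith [b.2]
  · obtain ⟨m, hm⟩ : ∃ m, hit w x = m + 1 := ⟨hit w x - 1, by omega⟩
    rw [hm] at a ⊢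
    have : hit (w + x 0) (shf 1 x) ≤ m := by
      apply Nat.sInf_le
      have a2 := a.2
      rw [psum_succ_shf] at a2
      refine ⟨?_, by linarith⟩
      by_contra hm
      have : m = 0 := by omega
      subst this
      rw [psum_zero'] at a2
      linarith
    omega

lemma offC_shift (μ h w : ℝ) (x : ℕ → ℝ) (hw : 0 ≤ w + x 0) (hf : Fin' w x) :
    offC μ h w x = offC μ h (w + x 0) (shf 1 x) := by
  unfold offC
  rw [hit_shift w x hw hf, psum_succ_shf, ← add_assoc]

lemma offC_of_neg (μ h w : ℝ) (x : ℕ → ℝ) (hw : w + x 0 < 0) :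
    offC μ h w x = ⌈-max (w + x 0) (-h) / μ⌉₊ := by
  unfold offC
  rw [hit_of_neg w x hw, psum_one']

lemma offC_le (μ h w : ℝ) (x : ℕ → ℝ) (hμ : 0 < μ) : offC μ h w x ≤ ⌈h / μ⌉₊ := by
  unfold offC
  apply Nat.ceil_mono
  apply div_le_div_of_nonneg_right _ hμ.le
  linarith [le_max_right (w + psum x (hit w x)) (-h)]

lemma de_succ (x : ℕ → ℝ) (μ h : ℝ) (n : ℕ) : deCusum x μ h 0 (n+1) =
    if deCusum x μ h 0 n < 0 then min (deCusum x μ h 0 n + μ) 0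
    else max (deCusum x μ h 0 n + x n) (-h) := by
  rw [deCusum]

lemma Rg_zero {x : ℕ → ℝ} {μ h : ℝ} (hh : 0 ≤ h) {n : ℕ} (hR : Rg μ h x n) :
    deCusum x μ h 0 n = 0 := by
  cases n with
  | zero => rfl
  | succ n =>
    obtain ⟨h1, h2⟩ := hR
    rw [de_succ] at h1 ⊢
    split_ifs at h1 ⊢ with hc
    · exact le_antisymm (min_le_right _ _) h1
    · have h2 := h2.resolve_left hc
      apply le_antisymm _ h1
      exact max_le h2.le (by linarith)

lemma de_ge (x : ℕ → ℝ) {μ h : ℝ} (hμ : 0 < μ) (hh : 0 ≤ h) (n : ℕ) :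
    -h ≤ deCusum x μ h 0 n := by
  induction n with
  | zero => simp [deCusum, hh]
  | succ n ih =>
    rw [de_succ]
    split_ifs with hc
    · exact le_min (by linarith) (by linarith)
    · exact le_max_right _ _

open Classical in
noncomputable def rem (μ h : ℝ) (x : ℕ → ℝ) (n : ℕ) : ℕ :=
  if 0 ≤ deCusum x μ h 0 n ∧ ¬ Rg μ h x n then hit (deCusum x μ h 0 n) (shf n x) else 0

open Classical in
noncomputable def crem (μ h : ℝ) (x : ℕ → ℝ) (n : ℕ) : ℕ :=
  if deCusum x μ h 0 n < 0 then ⌈-deCusum x μ h 0 n / μ⌉₊ else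
  if Rg μ h x n then 0 else offC μ h (deCusum x μ h 0 n) (shf n x)

lemma shf_zero (n : ℕ) (x : ℕ → ℝ) : shf n x 0 = x n := by simp [shf]
lemma shf_one_shf (n : ℕ) (x : ℕ → ℝ) : shf 1 (shf n x) = shf (n+1) x := by
  funext k; simp [shf, add_assoc]

/-- Invariant: finiteness of the passage times from the current state. -/
lemma inv_fin (x : ℕ → ℝ) {μ h : ℝ} (hh : 0 ≤ h)
    (hf : ∀ t, Fin' 0 (shf t x)) (n : ℕ) (hn : 0 ≤ deCusum x μ h 0 n) :
    Fin' (deCusum x μ h 0 n) (shf n x) := by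
  induction n with
  | zero => exact hf 0
  | succ n ih =>
    by_cases hR : Rg μ h x (n+1)
    · rw [Rg_zero hh hR]; exact hf _
    · have h1 : ¬ (deCusum x μ h 0 n < 0 ∨ deCusum x μ h 0 n + x n < 0) :=
        fun hc => hR ⟨hn, hc⟩
      push Not at h1
      have h2 : deCusum x μ h 0 (n+1) = deCusum x μ h 0 n + x n := by
        rw [de_succ, if_neg (not_lt.2 h1.1), max_eq_left (by linarith)]
      have := fin_shift _ (shf n x) (by rw [shf_zero]; exact h1.2) (ih h1.1)
      rw [shf_zero, shf_one_shf] at this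
      rwa [h2]

lemma step_hit (x : ℕ → ℝ) {μ h : ℝ} (hh : 0 ≤ h)
    (hf : ∀ t, Fin' 0 (shf t x)) (n : ℕ) (hn : 0 ≤ deCusum x μ h 0 n) :
    hit (deCusum x μ h 0 n) (shf n x) = rem μ h x (n+1) + 1 := by
  have hF := inv_fin x hh hf n hn
  by_cases hc : deCusum x μ h 0 n + x n < 0
  · rw [hit_of_neg _ _ (by rwa [shf_zero])]
    unfold rem
    rw [if_neg]
    rintro ⟨h1, h2⟩
    exact h2 ⟨h1, Or.inr hc⟩
  · push Not at hc
    have h2 : deCusum x μ h 0 (n+1) = deCusum x μ h 0 n + x n := by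
      rw [de_succ, if_neg (not_lt.2 hn), max_eq_left (by linarith)]
    rw [hit_shift _ _ (by rwa [shf_zero]) hF, shf_zero, shf_one_shf]
    unfold rem
    rw [if_pos, h2]
    refine ⟨by rwa [h2], ?_⟩
    rintro ⟨_, h3⟩
    rcases h3 with h3 | h3 <;> linarith

lemma step_off (x : ℕ → ℝ) {μ h : ℝ} (hμ : 0 < μ) (hh : 0 ≤ h)
    (hf : ∀ t, Fin' 0 (shf t x)) (n : ℕ) (hn : 0 ≤ deCusum x μ h 0 n) :
    offC μ h (deCusum x μ h 0 n) (shf n x) = crem μ h x (n+1) := by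
  have hF := inv_fin x hh hf n hn
  by_cases hc : deCusum x μ h 0 n + x n < 0
  · rw [offC_of_neg _ _ _ _ (by rwa [shf_zero]), shf_zero]
    have h2 : deCusum x μ h 0 (n+1) = max (deCusum x μ h 0 n + x n) (-h) := by
      rw [de_succ, if_neg (not_lt.2 hn)]
    rw [← h2]
    unfold crem
    split_ifs with h3 h4
    · rfl
    · rw [Rg_zero hh h4]; simp
    · exact absurd ⟨not_lt.1 h3, Or.inr hc⟩ h4
  · push Not at hc
    have h2 : deCusum x μ h 0 (n+1) = deCusum x μ h 0 n + x n := by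
      rw [de_succ, if_neg (not_lt.2 hn), max_eq_left (by linarith)]
    rw [offC_shift _ _ _ _ (by rwa [shf_zero]) hF, shf_zero, shf_one_shf]
    unfold crem
    rw [if_neg (by rw [h2]; linarith), if_neg, h2]
    rintro ⟨_, h3⟩
    rcases h3 with h3 | h3 <;> linarith

lemma step_neg (x : ℕ → ℝ) {μ h : ℝ} (hμ : 0 < μ) (n : ℕ)
    (hn : deCusum x μ h 0 n < 0) :
    rem μ h x (n+1) = 0 ∧ crem μ h x n = crem μ h x (n+1) + 1 := by
  have h2 : deCusum x μ h 0 (n+1) = min (deCusum x μ h 0 n + μ) 0 := by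
    rw [de_succ, if_pos hn]
  constructor
  · unfold rem
    rw [if_neg]
    rintro ⟨h1, h3⟩
    exact h3 ⟨h1, Or.inl hn⟩
  · unfold crem
    rw [if_pos hn]
    by_cases hc : deCusum x μ h 0 n + μ < 0
    · rw [min_eq_left hc.le] at h2
      rw [if_pos (by rwa [h2]), h2, ← Nat.ceil_add_one]
      · congr 1; field_simp; ring
      · apply div_nonneg _ hμ.le; linarith
    · push Not at hc
      rw [min_eq_right hc] at h2
      rw [if_neg (by simp [h2]), if_pos ⟨h2.ge, Or.inl hn⟩, zero_add, Nat.ceil_eq_iff one_ne_zero]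
      constructor
      · simp only [tsub_self, Nat.cast_zero]; apply div_pos _ hμ; linarith
      · rw [div_le_iff₀ hμ]; simp; linarith

open Classical in
noncomputable def onN (μ h : ℝ) (x : ℕ → ℝ) (n : ℕ) : ℕ :=
  ∑ j ∈ Finset.range n, if 0 ≤ deCusum x μ h 0 j then 1 else 0

open Classical in
lemma path_on (x : ℕ → ℝ) {μ h : ℝ} (hμ : 0 < μ) (hh : 0 ≤ h)
    (hf : ∀ t, Fin' 0 (shf t x)) (n : ℕ) :
    (∑ t ∈ Finset.range n, if Rg μ h x t then hit 0 (shf t x) else 0)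
      = onN μ h x n + rem μ h x n := by
  induction n with
  | zero => simp [onN, rem, Rg]
  | succ n ih =>
    unfold onN at *
    rw [Finset.sum_range_succ, Finset.sum_range_succ, ih]
    by_cases hn : 0 ≤ deCusum x μ h 0 n
    · have h1 := step_hit x hh hf n hn
      by_cases hR : Rg μ h x n
      · rw [Rg_zero hh hR] at h1
        have : rem μ h x n = 0 := by simp [rem, hR]
        rw [if_pos hR, if_pos hn, h1, this]; omega
      · have : rem μ h x n = hit (deCusum x μ h 0 n) (shf n x) := by simp [rem, hR, hn]
        rw [if_neg hR, if_pos hn, this, h1]; omega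
    · have h1 := step_neg x hμ n (not_le.1 hn)
      have hR : ¬ Rg μ h x n := fun hR => hn (Rg_zero hh hR).ge
      have : rem μ h x n = 0 := by simp [rem, hn]
      rw [if_neg hR, if_neg hn, h1.1, this]

open Classical in
lemma path_off (x : ℕ → ℝ) {μ h : ℝ} (hμ : 0 < μ) (hh : 0 ≤ h)
    (hf : ∀ t, Fin' 0 (shf t x)) (n : ℕ) :
    (∑ t ∈ Finset.range n, if Rg μ h x t then offC μ h 0 (shf t x) else 0) + onN μ h x n
      = n + crem μ h x n := by
  induction n with
  | zero => simp [onN, crem, Rg, deCusum]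
  | succ n ih =>
    unfold onN at *
    rw [Finset.sum_range_succ, Finset.sum_range_succ]
    by_cases hn : 0 ≤ deCusum x μ h 0 n
    · have h1 := step_off x hμ hh hf n hn
      by_cases hR : Rg μ h x n
      · rw [Rg_zero hh hR] at h1
        have : crem μ h x n = 0 := by simp [crem, hR, not_lt.2 hn]
        rw [if_pos hR, if_pos hn, h1]; omega
      · have : crem μ h x n = offC μ h (deCusum x μ h 0 n) (shf n x) := by
          simp [crem, hR, not_lt.2 hn]
        rw [if_neg hR, if_pos hn]; omega
    · have h1 := step_neg x hμ n (not_le.1 hn)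
      have hR : ¬ Rg μ h x n := fun hR => hn (Rg_zero hh hR).ge
      rw [if_neg hR, if_neg hn]; omega

lemma crem_le (x : ℕ → ℝ) {μ h : ℝ} (hμ : 0 < μ) (hh : 0 ≤ h) (n : ℕ) :
    crem μ h x n ≤ ⌈h / μ⌉₊ := by
  unfold crem
  split_ifs with h1 h2
  · apply Nat.ceil_mono
    apply div_le_div_of_nonneg_right _ hμ.le
    linarith [de_ge x hμ hh n]
  · exact Nat.zero_le _
  · exact offC_le _ _ _ _ hμ

open Classical in
lemma rem_le (x : ℕ → ℝ) {μ h : ℝ} (hμ : 0 < μ) (hh : 0 ≤ h)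
    (hf : ∀ t, Fin' 0 (shf t x)) (M n : ℕ) :
    rem μ h x n ≤ M + ∑ t ∈ Finset.range n,
      if M < hit 0 (shf t x) then hit 0 (shf t x) else 0 := by
  induction n with
  | zero => simp [rem, Rg]
  | succ n ih =>
    rw [Finset.sum_range_succ]
    by_cases hn : 0 ≤ deCusum x μ h 0 n
    · have h1 := step_hit x hh hf n hn
      by_cases hR : Rg μ h x n
      · rw [Rg_zero hh hR] at h1
        split_ifs <;> omega
      · have : rem μ h x n = hit (deCusum x μ h 0 n) (shf n x) := by simp [rem, hR, hn]
        omega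
    · have h1 := step_neg x hμ n (not_le.1 hn)
      omega

lemma meas_psum {Ω : Type*} [MeasurableSpace Ω] (ξ : ℕ → Ω → ℝ) (t : ℕ)
    (hm : ∀ i < t, Measurable (ξ i)) (n : ℕ) (hn : n ≤ t) :
    Measurable (fun ω => psum (fun k => ξ k ω) n) := by
  unfold psum
  exact Finset.measurable_fun_sum _ fun i hi => hm i (by have := Finset.mem_range.1 hi; omega)

lemma meas_de {Ω : Type*} [MeasurableSpace Ω] (ξ : ℕ → Ω → ℝ) (μ h : ℝ) (t : ℕ)
    (hm : ∀ i < t, Measurable (ξ i)) (n : ℕ) (hn : n ≤ t) :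
    Measurable (fun ω => deCusum (fun k => ξ k ω) μ h 0 n) := by
  induction n with
  | zero => simp only [deCusum]; exact measurable_const
  | succ n ih =>
    have ih := ih (by omega)
    have h1 := hm n (by omega)
    simp only [de_succ]
    exact Measurable.ite (measurableSet_lt ih measurable_const)
      ((ih.add_const _).min measurable_const) ((ih.add h1).max measurable_const)

open Classical in
noncomputable def RI (μ h : ℝ) (x : ℕ → ℝ) (t : ℕ) : ℝ := if Rg μ h x t then 1 else 0

lemma RI_nonneg (μ h : ℝ) (x : ℕ → ℝ) (t : ℕ) : 0 ≤ RI μ h x t := by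
  unfold RI; split_ifs <;> norm_num
lemma RI_le (μ h : ℝ) (x : ℕ → ℝ) (t : ℕ) : RI μ h x t ≤ 1 := by
  unfold RI; split_ifs <;> norm_num

lemma meas_RI {Ω : Type*} [MeasurableSpace Ω] (ξ : ℕ → Ω → ℝ) (μ h : ℝ) (t : ℕ)
    (hm : ∀ i < t, Measurable (ξ i)) :
    Measurable (fun ω => RI μ h (fun k => ξ k ω) t) := by
  unfold RI
  refine Measurable.ite ?_ measurable_const measurable_const
  cases t with
  | zero => simp [Rg]
  | succ n =>
    have a := meas_de ξ μ h (n+1) hm (n+1) le_rfl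
    have b := meas_de ξ μ h (n+1) hm n (by omega)
    have c := hm n (by omega)
    exact (measurableSet_le measurable_const a).inter
      ((measurableSet_lt b measurable_const).union (measurableSet_lt (b.add c) measurable_const))

lemma meas_psum' (n : ℕ) : Measurable (fun x : ℕ → ℝ => psum x n) :=
  meas_psum (fun k (x : ℕ → ℝ) => x k) n (fun i _ => measurable_pi_apply i) n le_rfl

lemma meas_hit : Measurable (hit 0) := by
  have hA : ∀ n : ℕ, MeasurableSet {x : ℕ → ℝ | 1 ≤ n ∧ 0 + psum x n < 0} := fun n =>
    (MeasurableSet.const _).inter (measurableSet_lt ((meas_psum' n).const_add 0) measurable_const)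
  apply measurable_to_countable'
  intro y
  rcases Nat.eq_zero_or_pos y with rfl | hy
  · have : Set.preimage (hit 0) {0} = ⋂ n : ℕ, {x : ℕ → ℝ | 1 ≤ n ∧ 0 + psum x n < 0}ᶜ := by
      ext x
      simp only [mem_preimage, mem_singleton_iff, mem_iInter, mem_compl_iff, hit,
        Nat.sInf_eq_zero]
      constructor
      · rintro (h | h)
        · exact absurd h.1 (by norm_num)
        · intro n hn
          have : n ∈ ({n : ℕ | 1 ≤ n ∧ 0 + psum x n < 0}) := hn
          rw [h] at this; exact this
      · intro h
        right
        ext n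
        simpa using h n
    rw [this]
    exact MeasurableSet.iInter fun n => (hA n).compl
  · have : Set.preimage (hit 0) {y} = {x : ℕ → ℝ | 1 ≤ y ∧ 0 + psum x y < 0} ∩
        ⋂ n ∈ Set.Iio y, {x : ℕ → ℝ | 1 ≤ n ∧ 0 + psum x n < 0}ᶜ := by
      ext x
      simp only [mem_preimage, mem_singleton_iff, mem_inter_iff, mem_iInter, mem_compl_iff]
      constructor
      · intro h
        have h0 := Nat.sInf_mem (Nat.nonempty_of_pos_sInf (s := {n : ℕ | 1 ≤ n ∧ 0 + psum x n < 0})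
          (by change 0 < hit 0 x; omega))
        refine ⟨by rw [← h]; exact h0, fun n hn hc => ?_⟩
        have := Nat.sInf_le (s := {n : ℕ | 1 ≤ n ∧ 0 + psum x n < 0}) hc
        change hit 0 x ≤ n at this
        have hn : n < y := hn
        omega
      · rintro ⟨h1, h2⟩
        apply le_antisymm (Nat.sInf_le h1)
        by_contra hc
        exact h2 (hit 0 x) (not_le.1 hc)
          (Nat.sInf_mem (s := {n : ℕ | 1 ≤ n ∧ 0 + psum x n < 0}) ⟨y, h1⟩)
    rw [this]
    exact (hA y).inter (MeasurableSet.biInter (Set.to_countable _) fun n _ => (hA n).compl)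

lemma meas_offC (μ h : ℝ) : Measurable (offC μ h 0) := by
  have h1 : Measurable (fun p : (ℕ → ℝ) × ℕ => psum p.1 p.2) :=
    measurable_from_prod_countable_left (fun n => meas_psum' n)
  have h2 : Measurable (fun x : ℕ → ℝ => psum x (hit 0 x)) :=
    h1.comp (measurable_id.prodMk meas_hit)
  unfold offC
  exact Nat.measurable_ceil.comp ((((h2.const_add 0).max measurable_const).neg).div_const μ)

lemma meas_past {Ω : Type*} {ξ : ℕ → Ω → ℝ} {t : ℕ} : ∀ i < t,
    Measurable[⨆ i ∈ Set.Iio t, MeasurableSpace.comap (ξ i) inferInstance] (ξ i) :=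
  fun i hi => (comap_measurable (ξ i)).mono (le_iSup₂_of_le i hi le_rfl) le_rfl

section prob
variable {Ω : Type*} [MeasurableSpace Ω] {P : Measure Ω} [IsProbabilityMeasure P]
  {ξ : ℕ → Ω → ℝ}

lemma shift_law (hmeas : ∀ n, Measurable (ξ n)) (hindep : iIndepFun ξ P)
    (hid : ∀ n, IdentDistrib (ξ n) (ξ 0) P P) (t : ℕ) :
    IdentDistrib (fun ω k => ξ k ω) (fun ω k => ξ (t + k) ω) P P where
  aemeasurable_fst := (measurable_pi_iff.2 hmeas).aemeasurable
  aemeasurable_snd := (measurable_pi_iff.2 fun k => hmeas (t+k)).aemeasurable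
  map_eq := by
    rw [hindep.map_fun_eq_infinitePi_map hmeas,
      (hindep.precomp (add_right_injective t)).map_fun_eq_infinitePi_map (fun k => hmeas (t+k))]
    congr 1
    funext k
    rw [(hid k).map_eq, (hid (t+k)).map_eq]

lemma key (hmeas : ∀ n, Measurable (ξ n)) (hindep : iIndepFun ξ P)
    (hid : ∀ n, IdentDistrib (ξ n) (ξ 0) P P) (t : ℕ) (f : Ω → ℝ)
    (hf : Measurable[⨆ i ∈ Set.Iio t, MeasurableSpace.comap (ξ i) inferInstance] f)
    (g : (ℕ → ℝ) → ℝ) (hg : Measurable g) :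
    ∫ ω, f ω * g (fun k => ξ (t + k) ω) ∂P = (∫ ω, f ω ∂P) * ∫ ω, g (fun k => ξ k ω) ∂P := by
  have hle : ∀ i, MeasurableSpace.comap (ξ i) inferInstance ≤ (inferInstance : MeasurableSpace Ω) :=
    fun i => (hmeas i).comap_le
  have hI := indep_iSup_of_disjoint hle hindep.iIndep (S := Set.Iio t) (T := Set.Ici t)
    (Set.disjoint_left.2 fun a ha hb => by
      have h1 : a < t := ha
      have h2 : t ≤ a := hb
      omega)
  have hf' : Measurable f := hf.mono (iSup₂_le fun i _ => hle i) le_rfl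
  have hsh : Measurable[⨆ i ∈ Set.Ici t, MeasurableSpace.comap (ξ i) inferInstance]
      (fun ω => g (fun k => ξ (t + k) ω)) := by
    refine @Measurable.comp _ _ _ (_) _ _ _ _ hg (@measurable_pi_lambda _ _ _ (_) _ _ fun k => ?_)
    exact (comap_measurable (ξ (t+k))).mono
      (le_iSup₂_of_le (t+k) (Set.mem_Ici.2 (Nat.le_add_right t k)) le_rfl) le_rfl
  have hind : IndepFun f (fun ω => g (fun k => ξ (t + k) ω)) P := by
    rw [IndepFun_iff_Indep]
    exact indep_of_indep_of_le_left (indep_of_indep_of_le_right hI hsh.comap_le) hf.comap_le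
  rw [hind.integral_fun_mul_eq_mul_integral hf'.aestronglyMeasurable
    (hg.comp (measurable_pi_iff.2 fun k => hmeas (t+k))).aestronglyMeasurable]
  congr 1
  exact ((shift_law hmeas hindep hid t).comp hg).integral_eq.symm

/-- survival -/
def Sv (x : ℕ → ℝ) (k : ℕ) : Prop := ∀ j ≤ k, 0 ≤ psum x j

open Classical in
noncomputable def SI (x : ℕ → ℝ) (k : ℕ) : ℝ := if Sv x k then 1 else 0

open Classical in
lemma SI_path (x : ℕ → ℝ) (M : ℝ) (hM : 0 ≤ M) (n : ℕ) :
    (if Sv x n then psum x n else -M) ≤ ∑ k ∈ Finset.range n, SI x k * max (x k) (-M) := by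
  induction n with
  | zero => simp [psum_zero', Sv]
  | succ n ih =>
    rw [Finset.sum_range_succ]
    by_cases hn : Sv x n
    · rw [if_pos hn] at ih
      have e : SI x n = 1 := by simp [SI, hn]
      have e2 : psum x (n+1) = psum x n + x n := by simp [psum, Finset.sum_range_succ]
      have := hn n le_rfl
      rw [e, e2]
      split_ifs
      · linarith [le_max_left (x n) (-M)]
      · linarith [le_max_right (x n) (-M)]
    · have e : SI x n = 0 := by simp [SI, hn]
      have hn' : ¬ Sv x (n+1) := fun h => hn fun j hj => h j (by omega)
      rw [if_neg hn] at ih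
      rw [if_neg hn', e]; linarith

lemma SI_path' (x : ℕ → ℝ) (M : ℝ) (hM : 0 ≤ M) (n : ℕ) :
    -M ≤ ∑ k ∈ Finset.range n, SI x k * max (x k) (-M) := by
  refine le_trans ?_ (SI_path x M hM n)
  split_ifs with h
  · linarith [h n le_rfl]
  · exact le_rfl

lemma meas_Sv {Ω : Type*} [MeasurableSpace Ω] (ξ : ℕ → Ω → ℝ) (t : ℕ)
    (hm : ∀ i < t, Measurable (ξ i)) :
    MeasurableSet {ω | Sv (fun k => ξ k ω) t} := by
  have : {ω | Sv (fun k => ξ k ω) t} = ⋂ j ∈ Set.Iic t, {ω | 0 ≤ psum (fun k => ξ k ω) j} := by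
    ext ω; simp [Sv]
  rw [this]
  exact MeasurableSet.biInter (Set.to_countable _) fun j hj =>
    measurableSet_le measurable_const (meas_psum ξ t hm j hj)

lemma meas_SI {Ω : Type*} [MeasurableSpace Ω] (ξ : ℕ → Ω → ℝ) (t : ℕ)
    (hm : ∀ i < t, Measurable (ξ i)) :
    Measurable (fun ω => SI (fun k => ξ k ω) t) := by
  unfold SI
  exact Measurable.ite (meas_Sv ξ t hm) measurable_const measurable_const

lemma exists_trunc (hint : Integrable (ξ 0) P) (hmean : ∫ ω, ξ 0 ω ∂P < 0) :
    ∃ M : ℝ, 0 ≤ M ∧ ∫ ω, max (ξ 0 ω) (-M) ∂P < 0 := by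
  have : Tendsto (fun M : ℕ => ∫ ω, max (ξ 0 ω) (-(M:ℝ)) ∂P) atTop (nhds (∫ ω, ξ 0 ω ∂P)) := by
    refine tendsto_integral_of_dominated_convergence (fun ω => |ξ 0 ω|) ?_ hint.abs ?_ ?_
    · intro n
      exact (hint.aestronglyMeasurable.aemeasurable.max aemeasurable_const).aestronglyMeasurable
    · intro n
      refine Eventually.of_forall fun ω => ?_
      rw [Real.norm_eq_abs, abs_le]
      have : (0:ℝ) ≤ n := Nat.cast_nonneg n
      constructor
      · exact (neg_abs_le _).trans (le_max_left _ _)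
      · exact max_le (le_abs_self _) (by linarith [abs_nonneg (ξ 0 ω)])
    · refine Eventually.of_forall fun ω => ?_
      apply tendsto_const_nhds.congr'
      obtain ⟨N, hN⟩ := exists_nat_ge (-ξ 0 ω)
      filter_upwards [eventually_ge_atTop N] with n hn
      rw [max_eq_left]
      have : (N:ℝ) ≤ n := by exact_mod_cast hn
      linarith
  obtain ⟨M, hM⟩ := (this.eventually (gt_mem_nhds hmean)).exists
  exact ⟨M, Nat.cast_nonneg M, hM⟩

lemma sum_surv (hmeas : ∀ n, Measurable (ξ n)) (hindep : iIndepFun ξ P)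
    (hid : ∀ n, IdentDistrib (ξ n) (ξ 0) P P)
    (hint : Integrable (ξ 0) P) (hmean : ∫ ω, ξ 0 ω ∂P < 0) :
    ∑' k, P {ω | Sv (fun k => ξ k ω) k} ≠ ∞ := by
  obtain ⟨M, hM, hneg⟩ := exists_trunc hint hmean
  set m := ∫ ω, max (ξ 0 ω) (-M) ∂P with hm
  have hintk : ∀ k, Integrable (fun ω => max (ξ k ω) (-M)) P := fun k =>
    ((hid k).integrable_iff.2 hint).sup (integrable_const _)
  have hmS := fun k => meas_SI ξ k (fun i _ => hmeas i)
  have hprod : ∀ k, Integrable (fun ω => SI (fun k => ξ k ω) k * max (ξ k ω) (-M)) P := by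
    intro k
    refine (hintk k).bdd_mul (c := 1) (hmS k).aestronglyMeasurable
      (Eventually.of_forall fun ω => ?_)
    unfold SI; split_ifs <;> simp
  have hS : ∀ k, ∫ ω, SI (fun k => ξ k ω) k ∂P = P.real {ω | Sv (fun k => ξ k ω) k} := by
    intro k
    rw [← integral_indicator_one (meas_Sv ξ k (fun i _ => hmeas i))]
    congr 1
  have hk : ∀ k, ∫ ω, SI (fun k => ξ k ω) k * max (ξ k ω) (-M) ∂P
      = P.real {ω | Sv (fun k => ξ k ω) k} * m := by
    intro k
    have := key hmeas hindep hid k (fun ω => SI (fun k => ξ k ω) k)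
      (@meas_SI Ω (⨆ i ∈ Set.Iio k, MeasurableSpace.comap (ξ i) inferInstance) ξ k
        meas_past) (fun x => max (x 0) (-M))
      ((measurable_pi_apply 0).max measurable_const)
    simp only [add_zero] at this
    rw [this, hS]
  have hsum : Summable fun k => P.real {ω | Sv (fun k => ξ k ω) k} := by
    apply summable_of_sum_range_le (c := M / (-m)) (fun _ => measureReal_nonneg)
    intro n
    have h1 : -M ≤ ∫ ω, ∑ k ∈ Finset.range n, SI (fun k => ξ k ω) k * max (ξ k ω) (-M) ∂P := by
      have : ∫ ω, (-M) ∂P = -M := by simp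
      refine this.ge.trans ?_
      exact integral_mono (integrable_const _) (integrable_finsetSum _ fun k _ => hprod k)
        fun ω => SI_path' (fun k => ξ k ω) M hM n
    rw [integral_finsetSum _ fun k _ => hprod k, Finset.sum_congr rfl fun k _ => hk k,
      ← Finset.sum_mul] at h1
    rw [le_div_iff₀ (by linarith)]
    linarith
  have := hsum.tsum_ofReal_ne_top
  simpa [Measure.real, ENNReal.ofReal_toReal (measure_ne_top P _)] using this

lemma ae_fin (hmeas : ∀ n, Measurable (ξ n)) (hindep : iIndepFun ξ P)
    (hid : ∀ n, IdentDistrib (ξ n) (ξ 0) P P)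
    (hint : Integrable (ξ 0) P) (hmean : ∫ ω, ξ 0 ω ∂P < 0) :
    ∀ᵐ ω ∂P, ∀ t, Fin' 0 (shf t (fun k => ξ k ω)) := by
  rw [ae_all_iff]
  intro t
  have h0 : ∀ᵐ ω ∂P, Fin' 0 (fun k => ξ k ω) := by
    have := ae_eventually_notMem (sum_surv hmeas hindep hid hint hmean)
    filter_upwards [this] with ω hω
    obtain ⟨k, hk⟩ := hω.exists
    simp only [Sv, not_forall, not_le] at hk
    obtain ⟨j, _, hj⟩ := hk
    refine ⟨j, ?_, by simpa using hj⟩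
    by_contra hc
    have : j = 0 := by omega
    subst this
    simp [psum_zero'] at hj
  refine (shift_law hmeas hindep hid t).ae_snd (p := Fin' 0) ?_ h0
  have : {x | Fin' 0 x} = ⋃ n : ℕ, {x : ℕ → ℝ | 1 ≤ n ∧ 0 + psum x n < 0} := by
    ext x; simp [Fin']
  rw [this]
  exact MeasurableSet.iUnion fun n =>
    (MeasurableSet.const _).inter (measurableSet_lt ((meas_psum' n).const_add 0) measurable_const)

lemma integrable_hit (hmeas : ∀ n, Measurable (ξ n)) (hindep : iIndepFun ξ P)
    (hid : ∀ n, IdentDistrib (ξ n) (ξ 0) P P)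
    (hint : Integrable (ξ 0) P) (hmean : ∫ ω, ξ 0 ω ∂P < 0) :
    Integrable (fun ω => (hit 0 (fun k => ξ k ω) : ℝ)) P := by
  have hm : Measurable (fun ω => hit 0 (fun k => ξ k ω)) :=
    meas_hit.comp (measurable_pi_iff.2 hmeas)
  refine ⟨(measurable_from_top.comp hm).aestronglyMeasurable, ?_⟩
  have hmS : ∀ k, MeasurableSet {ω | Sv (fun k => ξ k ω) k} :=
    fun k => meas_Sv ξ k (fun i _ => hmeas i)
  have hb : ∫⁻ ω, ∑' k, ({ω | Sv (fun k => ξ k ω) k}).indicator (1 : Ω → ℝ≥0∞) ω ∂P < ∞ := by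
    rw [lintegral_tsum fun k => (measurable_one.indicator (hmS k)).aemeasurable]
    simp only [lintegral_indicator_one (hmS _)]
    exact (sum_surv hmeas hindep hid hint hmean).lt_top
  refine lt_of_le_of_lt (lintegral_mono fun ω => ?_) hb
  rw [← ofReal_norm, Real.norm_of_nonneg (Nat.cast_nonneg _), ENNReal.ofReal_natCast]
  refine le_trans ?_ (ENNReal.sum_le_tsum (Finset.range (hit 0 (fun k => ξ k ω))))
  rw [Finset.sum_congr rfl (g := fun _ => (1 : ℝ≥0∞))]
  · simp
  · intro k hk
    have hk := Finset.mem_range.1 hk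
    rw [Set.indicator_of_mem]
    · rfl
    · intro j hj
      by_contra hc
      push Not at hc
      have : hit 0 (fun k => ξ k ω) ≤ j := by
        apply Nat.sInf_le
        refine ⟨?_, by simpa using hc⟩
        by_contra h0
        have : j = 0 := by omega
        subst this
        simp [psum_zero'] at hc
      omega

lemma renew {μ h : ℝ} (hmeas : ∀ n, Measurable (ξ n)) (hindep : iIndepFun ξ P)
    (hid : ∀ n, IdentDistrib (ξ n) (ξ 0) P P) (g : (ℕ → ℝ) → ℝ) (hg : Measurable g)
    (hgi : Integrable (fun ω => g (fun k => ξ k ω)) P) (n : ℕ) :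
    Integrable (fun ω => ∑ t ∈ Finset.range n,
      RI μ h (fun k => ξ k ω) t * g (shf t (fun k => ξ k ω))) P ∧
    ∫ ω, ∑ t ∈ Finset.range n,
      RI μ h (fun k => ξ k ω) t * g (shf t (fun k => ξ k ω)) ∂P =
    (∑ t ∈ Finset.range n, ∫ ω, RI μ h (fun k => ξ k ω) t ∂P) * ∫ ω, g (fun k => ξ k ω) ∂P := by
  have hi : ∀ t, Integrable (fun ω => RI μ h (fun k => ξ k ω) t * g (shf t (fun k => ξ k ω))) P := by
    intro t
    refine Integrable.bdd_mul (c := 1)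
      (((shift_law hmeas hindep hid t).comp hg).integrable_iff.1 hgi)
      (meas_RI ξ μ h t (fun i _ => hmeas i)).aestronglyMeasurable (Eventually.of_forall fun ω => ?_)
    rw [Real.norm_of_nonneg (RI_nonneg _ _ _ _)]
    exact RI_le _ _ _ _
  refine ⟨integrable_finsetSum _ fun t _ => hi t, ?_⟩
  rw [integral_finsetSum _ fun t _ => hi t, Finset.sum_mul]
  exact Finset.sum_congr rfl fun t _ =>
    key hmeas hindep hid t _ (@meas_RI Ω (⨆ i ∈ Set.Iio t, MeasurableSpace.comap (ξ i) inferInstance)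
      ξ μ h t meas_past) g hg

end prob

lemma final_lim (N r c U : ℕ → ℝ) (T C K : ℝ) (hT : 1 ≤ T) (hC : 0 ≤ C)
    (h1 : ∀ n, U n * T = N n + r n) (h2 : ∀ n, U n * C + N n = n + c n)
    (hc0 : ∀ n, 0 ≤ c n) (hcK : ∀ n, c n ≤ K)
    (hr0 : ∀ n, 0 ≤ r n) (hr : ∀ ε > 0, ∃ M : ℝ, ∀ n : ℕ, r n ≤ M + n * ε) :
    Tendsto (fun γ : ℕ => (1 / (γ:ℝ)) * N (γ - 1)) atTop (nhds (T / (T + C))) := by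
  have hcn : Tendsto (fun n : ℕ => c n / n) atTop (nhds 0) := by
    refine squeeze_zero (fun n => div_nonneg (hc0 n) (Nat.cast_nonneg n))
      (fun n => div_le_div_of_nonneg_right (hcK n) (Nat.cast_nonneg n)) ?_
    exact tendsto_const_div_atTop_nhds_zero_nat K
  have hrn : Tendsto (fun n : ℕ => r n / n) atTop (nhds 0) := by
    rw [Metric.tendsto_atTop]
    intro ε hε
    obtain ⟨M, hM⟩ := hr (ε/2) (by positivity)
    obtain ⟨n0, hn0⟩ := exists_nat_gt (2 * M / ε)
    refine ⟨n0 + 1, fun n hn => ?_⟩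
    have hn1 : (n0:ℝ) + 1 ≤ n := by exact_mod_cast hn
    have hpos : (0:ℝ) < n := by have : (0:ℝ) ≤ n0 := Nat.cast_nonneg _; linarith
    rw [Real.dist_eq, sub_zero, abs_of_nonneg (div_nonneg (hr0 n) hpos.le), div_lt_iff₀ hpos]
    rw [div_lt_iff₀ hε] at hn0
    have := hM n
    nlinarith
  have hN : Tendsto (fun n : ℕ => T / (T + C) * (1 + c n / n + r n / n) - r n / n) atTop
      (nhds (T / (T + C))) := by
    have := (((tendsto_const_nhds (x := (1:ℝ))).add hcn).add hrn).const_mul (T / (T + C))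
    have := this.sub hrn
    simpa using this
  rw [← tendsto_add_atTop_iff_nat 1]
  have h3 := hN.mul (tendsto_natCast_div_add_atTop (1:ℝ))
  rw [mul_one] at h3
  refine h3.congr' ?_
  filter_upwards [eventually_gt_atTop 0] with n hn
  have hpos : (0:ℝ) < n := by exact_mod_cast hn
  have hTC : 0 < T + C := by linarith
  have e1 : U n = (n + c n + r n) / (T + C) := by
    rw [eq_div_iff hTC.ne']; linarith [h1 n, h2 n]
  have e2 : N n = T * ((n + c n + r n) / (T + C)) - r n := by rw [← e1]; linarith [h1 n]
  simp only [Nat.add_sub_cancel]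
  rw [e2]; push_cast
  field_simp

/-- For i.i.d. integrable increments with negative mean, the pre-change duty cycle of the
DE-CuSum scheme started at `0` (the sample at time `k` being taken iff `W_{k-1} ≥ 0`) equals
`E[τ₋] / (E[τ₋] + E[⌈-max(S_{τ₋}, -h)/μ⌉])`, where `τ₋ = inf{n ≥ 1 : S_n < 0}` is the first
descending ladder epoch and `max(S_{τ₋}, -h)` the truncated ladder height; in particular the
duty cycle does not depend on any detection threshold. -/
theorem pdc_deCusum_eq {Ω : Type*} [MeasurableSpace Ω] (P : Measure Ω)
    [IsProbabilityMeasure P] (ξ : ℕ → Ω → ℝ) (hmeas : ∀ n, Measurable (ξ n))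
    (hindep : iIndepFun ξ P)
    (hid : ∀ n, IdentDistrib (ξ n) (ξ 0) P P)
    (hint : Integrable (ξ 0) P) (hmean : ∫ ω, ξ 0 ω ∂P < 0)
    (μ h : ℝ) (hμ : 0 < μ) (hh : 0 ≤ h) :
    Filter.limsup (fun γ : ℕ =>
        (1 / (γ : ℝ)) *
          ∫ ω, (Set.ncard {j : ℕ | j < γ - 1 ∧
            0 ≤ deCusum (fun k => ξ k ω) μ h 0 j} : ℝ) ∂P) Filter.atTop =
      (∫ ω, ((sInf {n : ℕ | 1 ≤ n ∧ psum (fun k => ξ k ω) n < 0} : ℕ) : ℝ) ∂P) /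
        ((∫ ω, ((sInf {n : ℕ | 1 ≤ n ∧ psum (fun k => ξ k ω) n < 0} : ℕ) : ℝ) ∂P) +
          ∫ ω, (⌈-max (psum (fun k => ξ k ω)
              ((sInf {n : ℕ | 1 ≤ n ∧ psum (fun k => ξ k ω) n < 0} : ℕ))) (-h) / μ⌉₊ : ℝ) ∂P) := by
  classical
  have hhit : ∀ x : ℕ → ℝ, sInf {n : ℕ | 1 ≤ n ∧ psum x n < 0} = hit 0 x := by
    intro x; simp [hit]
  have hoff : ∀ x : ℕ → ℝ, ⌈-max (psum x (hit 0 x)) (-h) / μ⌉₊ = offC μ h 0 x := by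
    intro x; simp [offC]
  have hcard : ∀ (x : ℕ → ℝ) (n : ℕ),
      Set.ncard {j : ℕ | j < n ∧ 0 ≤ deCusum x μ h 0 j} = onN μ h x n := by
    intro x n
    have : {j : ℕ | j < n ∧ 0 ≤ deCusum x μ h 0 j} =
        ((Finset.range n).filter (fun j => 0 ≤ deCusum x μ h 0 j) : Finset ℕ) := by
      ext j; simp
    rw [this, Set.ncard_coe_finset, Finset.card_filter]
    unfold onN
    exact Finset.sum_congr rfl fun j _ => by split_ifs <;> rfl
  simp only [hhit, hoff, hcard]
  apply Tendsto.limsup_eq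
  have hfin := ae_fin hmeas hindep hid hint hmean
  have hTi := integrable_hit hmeas hindep hid hint hmean
  have hmX : Measurable (fun ω k => ξ k ω) := measurable_pi_iff.2 hmeas
  have hgT : Measurable (fun x : ℕ → ℝ => (hit 0 x : ℝ)) := measurable_from_top.comp meas_hit
  have hgC : Measurable (fun x : ℕ → ℝ => (offC μ h 0 x : ℝ)) :=
    measurable_from_top.comp (meas_offC μ h)
  have hCi : Integrable (fun ω => (offC μ h 0 (fun k => ξ k ω) : ℝ)) P := by
    refine Integrable.of_bound (hgC.comp hmX).aestronglyMeasurable (⌈h / μ⌉₊ : ℝ)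
      (Eventually.of_forall fun ω => ?_)
    rw [Real.norm_of_nonneg (Nat.cast_nonneg _)]
    exact_mod_cast offC_le μ h 0 _ hμ
  have hNi : ∀ n, Integrable (fun ω => (onN μ h (fun k => ξ k ω) n : ℝ)) P := by
    intro n
    have hm : Measurable (fun ω => (onN μ h (fun k => ξ k ω) n : ℝ)) := by
      unfold onN
      push_cast
      exact Finset.measurable_fun_sum _ fun j _ => Measurable.ite
        (measurableSet_le measurable_const (meas_de ξ μ h j (fun i _ => hmeas i) j le_rfl))
        measurable_const measurable_const
    refine Integrable.of_bound hm.aestronglyMeasurable (n : ℝ) (Eventually.of_forall fun ω => ?_)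
    rw [Real.norm_of_nonneg (Nat.cast_nonneg _)]
    have : onN μ h (fun k => ξ k ω) n ≤ n := by
      unfold onN
      refine (Finset.sum_le_card_nsmul _ _ 1 fun j _ => ?_).trans (by simp)
      split_ifs <;> norm_num
    exact_mod_cast this
  have hRT := fun n => renew (μ := μ) (h := h) hmeas hindep hid _ hgT hTi n
  have hRC := fun n => renew (μ := μ) (h := h) hmeas hindep hid _ hgC hCi n
  -- pathwise identities
  have hp1 : ∀ n, ∀ᵐ ω ∂P, (∑ t ∈ Finset.range n, RI μ h (fun k => ξ k ω) t *
      (hit 0 (shf t (fun k => ξ k ω)) : ℝ)) - onN μ h (fun k => ξ k ω) n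
      = rem μ h (fun k => ξ k ω) n := by
    intro n
    filter_upwards [hfin] with ω hω
    have := path_on (fun k => ξ k ω) hμ hh hω n
    have h2 : (∑ t ∈ Finset.range n, RI μ h (fun k => ξ k ω) t *
      (hit 0 (shf t (fun k => ξ k ω)) : ℝ)) =
      ((∑ t ∈ Finset.range n, if Rg μ h (fun k => ξ k ω) t then
        hit 0 (shf t (fun k => ξ k ω)) else 0 : ℕ) : ℝ) := by
      push_cast
      exact Finset.sum_congr rfl fun t _ => by unfold RI; split_ifs <;> simp
    rw [h2, this]; push_cast; ring
  have hp2 : ∀ n, ∀ᵐ ω ∂P, (∑ t ∈ Finset.range n, RI μ h (fun k => ξ k ω) t *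
      (offC μ h 0 (shf t (fun k => ξ k ω)) : ℝ)) + onN μ h (fun k => ξ k ω) n - n
      = crem μ h (fun k => ξ k ω) n := by
    intro n
    filter_upwards [hfin] with ω hω
    have := path_off (fun k => ξ k ω) hμ hh hω n
    have h2 : (∑ t ∈ Finset.range n, RI μ h (fun k => ξ k ω) t *
      (offC μ h 0 (shf t (fun k => ξ k ω)) : ℝ)) =
      ((∑ t ∈ Finset.range n, if Rg μ h (fun k => ξ k ω) t then
        offC μ h 0 (shf t (fun k => ξ k ω)) else 0 : ℕ) : ℝ) := by
      push_cast
      exact Finset.sum_congr rfl fun t _ => by unfold RI; split_ifs <;> simp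
    rw [h2, ← Nat.cast_add, this]; push_cast; ring
  have hri : ∀ n, Integrable (fun ω => (rem μ h (fun k => ξ k ω) n : ℝ)) P := fun n =>
    ((hRT n).1.sub (hNi n)).congr (hp1 n)
  have hci : ∀ n, Integrable (fun ω => (crem μ h (fun k => ξ k ω) n : ℝ)) P := fun n =>
    (((hRC n).1.add (hNi n)).sub (integrable_const (n:ℝ))).congr (hp2 n)
  refine final_lim (fun n => ∫ ω, (onN μ h (fun k => ξ k ω) n : ℝ) ∂P)
    (fun n => ∫ ω, (rem μ h (fun k => ξ k ω) n : ℝ) ∂P)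
    (fun n => ∫ ω, (crem μ h (fun k => ξ k ω) n : ℝ) ∂P)
    (fun n => ∑ t ∈ Finset.range n, ∫ ω, RI μ h (fun k => ξ k ω) t ∂P)
    _ _ (⌈h / μ⌉₊ : ℝ) ?_ (integral_nonneg fun ω => Nat.cast_nonneg _) ?_ ?_
    (fun n => integral_nonneg fun ω => Nat.cast_nonneg _) ?_
    (fun n => integral_nonneg fun ω => Nat.cast_nonneg _) ?_
  · have : ∫ ω, (1:ℝ) ∂P = 1 := by simp
    refine this.ge.trans (integral_mono_ae (integrable_const _) hTi ?_)
    filter_upwards [hfin] with ω hω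
    have h0 := hω 0
    have e : shf 0 (fun k => ξ k ω) = fun k => ξ k ω := by funext k; simp [shf]
    rw [e] at h0
    exact_mod_cast hit_pos 0 _ h0
  · intro n
    rw [← (hRT n).2, ← integral_congr_ae (hp1 n), integral_sub (hRT n).1 (hNi n)]
    ring
  · intro n
    rw [← (hRC n).2, ← integral_congr_ae (hp2 n),
      integral_sub (f := fun ω => _ + _) ((hRC n).1.add (hNi n)) (integrable_const _),
      integral_add (hRC n).1 (hNi n)]
    simp
  · intro n
    have : ∫ ω, (⌈h / μ⌉₊ : ℝ) ∂P = (⌈h / μ⌉₊ : ℝ) := by simp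
    refine le_trans (integral_mono (hci n) (integrable_const _) fun ω => ?_) this.le
    exact Nat.cast_le.2 (crem_le (fun k => ξ k ω) hμ hh n)
  · intro ε hε
    have htail : Tendsto (fun M : ℕ => ∫ ω, (if M < hit 0 (fun k => ξ k ω) then
        (hit 0 (fun k => ξ k ω) : ℝ) else 0) ∂P) atTop (nhds (∫ ω, (0:ℝ) ∂P)) := by
      refine tendsto_integral_of_dominated_convergence _ (fun M => ?_) hTi (fun M => ?_) ?_
      · exact (Measurable.ite (measurableSet_lt measurable_const (meas_hit.comp hmX))
          (hgT.comp hmX) measurable_const).aestronglyMeasurable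
      · refine Eventually.of_forall fun ω => ?_
        split_ifs <;> simp
      · refine Eventually.of_forall fun ω => ?_
        apply tendsto_const_nhds.congr'
        filter_upwards [eventually_ge_atTop (hit 0 (fun k => ξ k ω))] with M hM
        rw [if_neg (not_lt.2 hM)]
    rw [integral_zero] at htail
    obtain ⟨M, hM⟩ := (htail.eventually (gt_mem_nhds hε)).exists
    refine ⟨M, fun n => ?_⟩
    have hgM : Measurable (fun x : ℕ → ℝ => if M < hit 0 x then (hit 0 x : ℝ) else 0) :=
      Measurable.ite (measurableSet_lt measurable_const meas_hit) hgT measurable_const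
    have hMi : Integrable (fun ω => if M < hit 0 (fun k => ξ k ω) then
        (hit 0 (fun k => ξ k ω) : ℝ) else 0) P := by
      refine hTi.mono (hgM.comp hmX).aestronglyMeasurable (Eventually.of_forall fun ω => ?_)
      split_ifs <;> simp
    have hst : ∀ t, IdentDistrib (fun ω => if M < hit 0 (fun k => ξ k ω) then
        (hit 0 (fun k => ξ k ω) : ℝ) else 0) (fun ω => if M < hit 0 (shf t fun k => ξ k ω) then
        (hit 0 (shf t fun k => ξ k ω) : ℝ) else 0) P P := fun t =>
      (shift_law hmeas hindep hid t).comp hgM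
    have hsi := fun t => (hst t).integrable_iff.1 hMi
    have hle : ∫ ω, (rem μ h (fun k => ξ k ω) n : ℝ) ∂P ≤
        ∫ ω, ((M : ℝ) + ∑ t ∈ Finset.range n, if M < hit 0 (shf t fun k => ξ k ω) then
        (hit 0 (shf t fun k => ξ k ω) : ℝ) else 0) ∂P := by
      refine integral_mono_ae (hri n)
        ((integrable_const _).add (integrable_finsetSum _ fun t _ => hsi t)) ?_
      filter_upwards [hfin] with ω hω
      exact_mod_cast rem_le (fun k => ξ k ω) hμ hh hω M n
    refine hle.trans ?_
    rw [integral_add (integrable_const _) (integrable_finsetSum _ fun t _ => hsi t),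
      integral_finsetSum _ fun t _ => hsi t]
    simp only [← (hst _).integral_eq]
    simp only [integral_const, probReal_univ, smul_eq_mul, one_mul, Finset.sum_const,
      Finset.card_range, nsmul_eq_mul]
    have := mul_le_mul_of_nonneg_left hM.le (Nat.cast_nonneg (α := ℝ) n)
    linarith
end

section
/- Let (ξ_n)_{n≥1} be i.i.d. real random variables satisfying E[exp(ξ_1)] ≤ 1 (as holds when ξ_n = log(f_1(X_n)/f_0(X_n)) is the log-likelihood ratio of i.i.d. observations X_n distributed with density f_0). Let (C_n)_{n≥0} be the CuSum sequence started at 0 and, for A ≥ 0, let τ_C = inf{n ≥ 1 : C_n > A}. Then E[τ_C] ≥ e^A; equivalently, with A = |log α| for α ∈ (0,1], the false alarm rate satisfies FAR(τ_C) = 1/E[τ_C] ≤ α. -/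
open MeasureTheory Filter Set ProbabilityTheory
open scoped ENNReal

/-- CuSum sequence started at `c`, driven by the sequence `ξ`
(`ξ n` is the `(n+1)`-th increment, so the sequence is indexed from 1 via `n ↦ ξ (n-1)`). -/
def cusum (ξ : ℕ → ℝ) (c : ℝ) : ℕ → ℝ
  | 0 => c
  | n + 1 => max 0 (cusum ξ c n + ξ n)
/-- Shiryaev-Roberts statistic. -/
noncomputable def srStat (x : ℕ → ℝ) : ℕ → ℝ≥0∞
  | 0 => 0
  | n + 1 => (1 + srStat x n) * ENNReal.ofReal (Real.exp (x n))

/-- No alarm up to time n. -/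
def noAlarm (A : ℝ) (n : ℕ) : Set (ℕ → ℝ) := {x | ∀ k ≤ n, cusum x 0 k ≤ A}

lemma exp_cusum_le (x : ℕ → ℝ) (n : ℕ) :
    ENNReal.ofReal (Real.exp (cusum x 0 n)) ≤ max 1 (srStat x n) := by
  induction n with
  | zero => simp [cusum]
  | succ n ih =>
    rw [cusum, srStat]
    rcases max_cases 0 (cusum x 0 n + x n) with ⟨h, _⟩ | ⟨h, _⟩
    · rw [h]; simp
    · rw [h, Real.exp_add, ENNReal.ofReal_mul (Real.exp_nonneg _)]
      refine le_trans ?_ (le_max_right _ _)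
      gcongr
      refine ih.trans (max_le ?_ ?_)
      · exact le_self_add
      · exact le_add_self

lemma exp_le_srStat {A : ℝ} (hA : 0 ≤ A) (x : ℕ → ℝ) (n : ℕ) (h : A < cusum x 0 n) :
    ENNReal.ofReal (Real.exp A) ≤ srStat x n := by
  have h1 := exp_cusum_le x n
  have h2 : 1 < ENNReal.ofReal (Real.exp (cusum x 0 n)) := by
    rw [ENNReal.one_lt_ofReal]; exact Real.one_lt_exp_iff.2 (hA.trans_lt h)
  have h3 : ENNReal.ofReal (Real.exp A) ≤ ENNReal.ofReal (Real.exp (cusum x 0 n)) := by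
    gcongr
  rcases le_max_iff.1 h1 with h4 | h4
  · exact absurd h4 (not_le.2 h2)
  · exact h3.trans h4

lemma measurable_cusum (n : ℕ) : Measurable (fun x : ℕ → ℝ => cusum x 0 n) := by
  induction n with
  | zero => simp only [cusum]; exact measurable_const
  | succ n ih =>
    simp only [cusum]
    exact measurable_const.max (ih.add (measurable_pi_apply n))

lemma measurable_srStat (n : ℕ) : Measurable (fun x : ℕ → ℝ => srStat x n) := by
  induction n with
  | zero => simp only [srStat]; exact measurable_const
  | succ n ih =>
    simp only [srStat]
    exact (ih.const_add 1).mul (Real.measurable_exp.comp (measurable_pi_apply n)).ennreal_ofReal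

lemma measurableSet_noAlarm (A : ℝ) (n : ℕ) : MeasurableSet (noAlarm A n) := by
  have : noAlarm A n = ⋂ k, ⋂ (_ : k ≤ n), {x | cusum x 0 k ≤ A} := by
    ext x; simp [noAlarm]
  rw [this]
  exact MeasurableSet.iInter fun k => MeasurableSet.iInter fun _ =>
    measurableSet_le (measurable_cusum k) measurable_const

lemma cusum_congr {x y : ℕ → ℝ} (n : ℕ) (h : ∀ k < n, x k = y k) :
    cusum x 0 n = cusum y 0 n := by
  induction n with
  | zero => simp [cusum]
  | succ n ih => rw [cusum, cusum, ih fun k hk => h k (by omega), h n (by omega)]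

lemma srStat_congr {x y : ℕ → ℝ} (n : ℕ) (h : ∀ k < n, x k = y k) :
    srStat x n = srStat y n := by
  induction n with
  | zero => simp [srStat]
  | succ n ih => rw [srStat, srStat, ih fun k hk => h k (by omega), h n (by omega)]

/-- weight used in the recursion -/
noncomputable def srWeight (A : ℝ) (n : ℕ) (x : ℕ → ℝ) : ℝ≥0∞ :=
  (noAlarm A n).indicator (fun x => 1 + srStat x n) x

lemma measurable_srWeight (A : ℝ) (n : ℕ) : Measurable (srWeight A n) :=
  ((measurable_srStat n).const_add 1).indicator (measurableSet_noAlarm A n)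

lemma srWeight_congr (A : ℝ) {x y : ℕ → ℝ} (n : ℕ) (h : ∀ k < n, x k = y k) :
    srWeight A n x = srWeight A n y := by
  have hm : x ∈ noAlarm A n ↔ y ∈ noAlarm A n := by
    refine forall₂_congr fun k hk => ?_
    rw [cusum_congr k fun j hj => h j (by omega)]
  unfold srWeight
  by_cases hx : x ∈ noAlarm A n
  · rw [indicator_of_mem hx, indicator_of_mem (hm.1 hx), srStat_congr n h]
  · rw [indicator_of_notMem hx, indicator_of_notMem (fun h => hx (hm.2 h))]

lemma sum_le_firstTime (A : ℝ) (x : ℕ → ℝ) (n : ℕ) :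
    ∑ k ∈ Finset.range n, (noAlarm A k).indicator (fun _ => (1 : ℝ≥0∞)) x ≤
      (firstTime (fun n => A < cusum x 0 n) : ℝ≥0∞) := by
  by_cases hne : {n : ℕ | 1 ≤ n ∧ A < cusum x 0 n}.Nonempty
  · obtain ⟨m, ⟨_, hm⟩, he⟩ := csInf_mem (hne.image ((↑) : ℕ → ℕ∞))
    rw [firstTime, ← he, ENat.toENNReal_coe]
    calc ∑ k ∈ Finset.range n, (noAlarm A k).indicator (fun _ => (1 : ℝ≥0∞)) x
        ≤ ∑ k ∈ Finset.range n, if k < m then 1 else 0 := by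
          refine Finset.sum_le_sum fun k _ => ?_
          by_cases hk : k < m
          · simp only [hk, if_true]
            exact indicator_le_self' (fun _ _ => zero_le) x
          · rw [indicator_of_notMem]
            · exact zero_le
            · intro h
              exact absurd (h m (by omega)) (not_le.2 hm)
      _ ≤ (m : ℝ≥0∞) := by
          rw [← Finset.sum_filter, Finset.sum_const, nsmul_eq_mul, mul_one]
          have : ((Finset.range n).filter (· < m)).card ≤ m := by
            calc _ ≤ (Finset.range m).card := Finset.card_le_card (by
                  intro k hk; simp at hk ⊢; exact hk.2)
              _ = m := Finset.card_range m
          exact_mod_cast this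
  · rw [not_nonempty_iff_eq_empty] at hne
    rw [firstTime, hne]
    simp

section
variable {Ω : Type*} [MeasurableSpace Ω] (P : Measure Ω)
    [IsProbabilityMeasure P] (ξ : ℕ → Ω → ℝ)

lemma weight_step (hmeas : ∀ n, Measurable (ξ n))
    (hindep : iIndepFun ξ P)
    (hid : ∀ n, IdentDistrib (ξ n) (ξ 0) P P)
    (hexp : ∫⁻ ω, ENNReal.ofReal (Real.exp (ξ 0 ω)) ∂P ≤ 1) (A : ℝ) (n : ℕ) :
    ∫⁻ ω, srWeight A n (fun k => ξ k ω) * ENNReal.ofReal (Real.exp (ξ n ω)) ∂P ≤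
      ∫⁻ ω, srWeight A n (fun k => ξ k ω) ∂P := by
  have hx : Measurable fun ω => (fun k => ξ k ω) := measurable_pi_lambda _ hmeas
  have hE : Measurable fun t : ℝ => ENNReal.ofReal (Real.exp t) :=
    Real.measurable_exp.ennreal_ofReal
  have h0 := hindep.indepFun_finset (Finset.range n) {n} (by simp) hmeas
  let e : (Finset.range n → ℝ) → ℕ → ℝ := fun y k => if h : k ∈ Finset.range n then y ⟨k, h⟩ else 0
  have he : Measurable e := by
    refine measurable_pi_lambda _ fun k => ?_
    by_cases h : k ∈ Finset.range n
    · simp only [e, h, dif_pos]; exact measurable_pi_apply _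
    · simp only [e, h, dif_neg, not_false_eq_true]; exact measurable_const
  have h1 := h0.comp ((measurable_srWeight A n).comp he)
    (hE.comp (measurable_pi_apply (⟨n, by simp⟩ : ({n} : Finset ℕ))))
  have h2 : (srWeight A n ∘ e) ∘ (fun ω (i : Finset.range n) => ξ i ω) =
      fun ω => srWeight A n (fun k => ξ k ω) := by
    funext ω
    refine srWeight_congr A n fun k hk => ?_
    simp [e, hk]
  rw [h2] at h1
  have h3 := lintegral_mul_eq_lintegral_mul_lintegral_of_indepFun
    ((measurable_srWeight A n).comp hx) (hE.comp (hmeas n)) h1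
  have h4 : ∫⁻ ω, ENNReal.ofReal (Real.exp (ξ n ω)) ∂P ≤ 1 := by
    exact ((hid n).comp hE).lintegral_eq.trans_le hexp
  calc _ = _ := h3
    _ ≤ _ * 1 := mul_le_mul_right h4 _
    _ = _ := mul_one _

lemma sum_bound (hmeas : ∀ n, Measurable (ξ n))
    (hindep : iIndepFun ξ P)
    (hid : ∀ n, IdentDistrib (ξ n) (ξ 0) P P)
    (hexp : ∫⁻ ω, ENNReal.ofReal (Real.exp (ξ 0 ω)) ∂P ≤ 1) (A : ℝ) (hA : 0 ≤ A) (n : ℕ) :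
    ENNReal.ofReal (Real.exp A) * ∑ k ∈ Finset.range n,
      P ((fun ω k => ξ k ω) ⁻¹' (noAlarm A k \ noAlarm A (k+1))) +
      ∫⁻ ω, (noAlarm A n).indicator (fun x => srStat x n) (fun k => ξ k ω) ∂P ≤
    ∑ k ∈ Finset.range n, P ((fun ω k => ξ k ω) ⁻¹' (noAlarm A k)) := by
  have hx : Measurable fun ω => (fun k => ξ k ω) := measurable_pi_lambda _ hmeas
  induction n with
  | zero => simp [srStat]
  | succ n ih =>
    have hD := hx (measurableSet_noAlarm A n)
    have hdiff := hx ((measurableSet_noAlarm A n).diff (measurableSet_noAlarm A (n+1)))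
    have key : ENNReal.ofReal (Real.exp A) *
          P ((fun ω k => ξ k ω) ⁻¹' (noAlarm A n \ noAlarm A (n+1))) +
        ∫⁻ ω, (noAlarm A (n+1)).indicator (fun x => srStat x (n+1)) (fun k => ξ k ω) ∂P ≤
        P ((fun ω k => ξ k ω) ⁻¹' (noAlarm A n)) +
        ∫⁻ ω, (noAlarm A n).indicator (fun x => srStat x n) (fun k => ξ k ω) ∂P := by
      calc _ = ∫⁻ ω, ((fun ω k => ξ k ω) ⁻¹' (noAlarm A n \ noAlarm A (n+1))).indicator
              (fun _ => ENNReal.ofReal (Real.exp A)) ω +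
              (noAlarm A (n+1)).indicator (fun x => srStat x (n+1)) (fun k => ξ k ω) ∂P := by
            rw [lintegral_add_left (measurable_const.indicator hdiff),
              lintegral_indicator_const hdiff]
        _ ≤ ∫⁻ ω, srWeight A n (fun k => ξ k ω) * ENNReal.ofReal (Real.exp (ξ n ω)) ∂P := by
            refine lintegral_mono fun ω => ?_
            dsimp only
            set x : ℕ → ℝ := fun k => ξ k ω with hxd
            have hs : (1 + srStat x n) * ENNReal.ofReal (Real.exp (ξ n ω)) = srStat x (n+1) := rfl
            by_cases h1 : x ∈ noAlarm A (n+1)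
            · have h2 : x ∈ noAlarm A n := fun k hk => h1 k (by omega)
              rw [indicator_of_notMem (fun h => h.2 h1), indicator_of_mem h1, srWeight,
                indicator_of_mem h2, hs, zero_add]
            · rw [indicator_of_notMem h1, add_zero]
              by_cases h2 : x ∈ noAlarm A n
              · rw [indicator_of_mem (show ω ∈ (fun ω k => ξ k ω) ⁻¹' (noAlarm A n \ noAlarm A (n+1)) from ⟨h2, h1⟩), srWeight,
                  indicator_of_mem h2, hs]
                apply exp_le_srStat hA
                by_contra hc
                refine h1 fun k hk => ?_
                rcases Nat.lt_or_ge n k with h | h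
                · obtain rfl : k = n + 1 := by omega
                  exact not_lt.1 hc
                · exact h2 k h
              · rw [indicator_of_notMem (fun h => h2 h.1)]
                exact zero_le
        _ ≤ ∫⁻ ω, srWeight A n (fun k => ξ k ω) ∂P := weight_step P ξ hmeas hindep hid hexp A n
        _ = ∫⁻ ω, ((fun ω k => ξ k ω) ⁻¹' (noAlarm A n)).indicator (fun _ => 1) ω +
              (noAlarm A n).indicator (fun x => srStat x n) (fun k => ξ k ω) ∂P := by
            refine lintegral_congr fun ω => ?_
            by_cases h2 : (fun k => ξ k ω) ∈ noAlarm A n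
            · rw [srWeight, indicator_of_mem h2, indicator_of_mem h2,
                indicator_of_mem (show ω ∈ _ from h2)]
            · rw [srWeight, indicator_of_notMem h2, indicator_of_notMem h2,
                indicator_of_notMem (show ω ∉ _ from h2), zero_add]
        _ = _ := by
            rw [lintegral_add_left (measurable_const.indicator hD),
              lintegral_indicator_const hD, one_mul]
    rw [Finset.sum_range_succ, Finset.sum_range_succ, mul_add, add_assoc]
    calc _ ≤ _ := add_le_add le_rfl key
      _ = _ := by rw [add_left_comm, add_comm (P _)]
      _ ≤ _ := add_le_add ih le_rfl

lemma main_bound_s16 (hmeas : ∀ n, Measurable (ξ n))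
    (hindep : iIndepFun ξ P)
    (hid : ∀ n, IdentDistrib (ξ n) (ξ 0) P P)
    (hexp : ∫⁻ ω, ENNReal.ofReal (Real.exp (ξ 0 ω)) ∂P ≤ 1) (A : ℝ) (hA : 0 ≤ A) :
    ENNReal.ofReal (Real.exp A) ≤
        ∫⁻ ω, (firstTime (fun n => A < cusum (fun k => ξ k ω) 0 n) : ℝ≥0∞) ∂P := by
  have hx : Measurable fun ω => (fun k => ξ k ω) := measurable_pi_lambda _ hmeas
  set T := ∫⁻ ω, (firstTime (fun n => A < cusum (fun k => ξ k ω) 0 n) : ℝ≥0∞) ∂P with hT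
  let p : ℕ → ℝ≥0∞ := fun k => P ((fun ω k => ξ k ω) ⁻¹' (noAlarm A k))
  have hsum : ∀ n, ∑ k ∈ Finset.range n, p k ≤ T := by
    intro n
    calc ∑ k ∈ Finset.range n, p k = ∑ k ∈ Finset.range n,
          ∫⁻ ω, (noAlarm A k).indicator (fun _ => (1 : ℝ≥0∞)) (fun k => ξ k ω) ∂P := by
          refine Finset.sum_congr rfl fun k _ => ?_
          exact (lintegral_indicator_one (hx (measurableSet_noAlarm A k))).symm
      _ = ∫⁻ ω, ∑ k ∈ Finset.range n,
            (noAlarm A k).indicator (fun _ => (1 : ℝ≥0∞)) (fun k => ξ k ω) ∂P := by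
          rw [lintegral_finsetSum]
          exact fun k _ => (measurable_const.indicator (measurableSet_noAlarm A k)).comp hx
      _ ≤ T := lintegral_mono fun ω => sum_le_firstTime A _ n
  have htel : ∀ n, ∑ k ∈ Finset.range n,
      P ((fun ω k => ξ k ω) ⁻¹' (noAlarm A k \ noAlarm A (k+1))) + p n = 1 := by
    intro n
    induction n with
    | zero =>
      have : noAlarm A 0 = univ := by
        ext x; simp [noAlarm, cusum, hA]
      simp [p, this]
    | succ n ih =>
      rw [Finset.sum_range_succ, add_assoc, ← ih]
      congr 1
      have hsub : noAlarm A (n+1) ⊆ noAlarm A n := fun x h k hk => h k (by omega)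
      have := measure_sdiff_add_inter (μ := P) ((fun ω k => ξ k ω) ⁻¹' (noAlarm A n))
        (hx (measurableSet_noAlarm A (n+1)))
      rw [inter_eq_self_of_subset_right (preimage_mono hsub)] at this
      exact this
  by_cases hTtop : T = ∞
  · rw [hTtop]; exact le_top
  have hle : ∀ n, ENNReal.ofReal (Real.exp A) ≤ T + ENNReal.ofReal (Real.exp A) * p n := by
    intro n
    calc ENNReal.ofReal (Real.exp A) = ENNReal.ofReal (Real.exp A) * 1 := (mul_one _).symm
      _ = _ := by rw [← htel n, mul_add]
      _ ≤ _ := by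
        gcongr
        exact (le_self_add.trans (sum_bound P ξ hmeas hindep hid hexp A hA n)).trans (hsum n)
  have hts : ∑' k, p k ≠ ∞ := by
    refine ne_top_of_le_ne_top hTtop ?_
    rw [ENNReal.tsum_eq_iSup_nat]
    exact iSup_le hsum
  have h0 : Tendsto p atTop (nhds 0) := ENNReal.tendsto_atTop_zero_of_tsum_ne_top hts
  have h1 : Tendsto (fun n => T + ENNReal.ofReal (Real.exp A) * p n) atTop (nhds (T + 
      ENNReal.ofReal (Real.exp A) * 0)) :=
    (ENNReal.Tendsto.const_mul h0 (Or.inr ENNReal.ofReal_ne_top)).const_add T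
  rw [mul_zero, add_zero] at h1
  exact ge_of_tendsto' h1 hle

end

/-- If the i.i.d. increments satisfy `E[exp ξ₁] ≤ 1` (as for log-likelihood ratios under the
pre-change law), then for any threshold `A ≥ 0` the CuSum stopping time satisfies
`E[τ_C] ≥ e^A`; equivalently, with `A = |log α|` the false alarm rate `1/E[τ_C]` is at
most `α`. -/
theorem cusum_far_bound {Ω : Type*} [MeasurableSpace Ω] (P : Measure Ω)
    [IsProbabilityMeasure P] (ξ : ℕ → Ω → ℝ) (hmeas : ∀ n, Measurable (ξ n))
    (hindep : iIndepFun ξ P)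
    (hid : ∀ n, IdentDistrib (ξ n) (ξ 0) P P)
    (hexp : ∫⁻ ω, ENNReal.ofReal (Real.exp (ξ 0 ω)) ∂P ≤ 1)
    (A : ℝ) (hA : 0 ≤ A) :
    ENNReal.ofReal (Real.exp A) ≤
        ∫⁻ ω, (firstTime (fun n => A < cusum (fun k => ξ k ω) 0 n) : ℝ≥0∞) ∂P ∧
      ∀ α : ℝ, 0 < α → α ≤ 1 → A = |Real.log α| →
        (∫⁻ ω, (firstTime (fun n => A < cusum (fun k => ξ k ω) 0 n) : ℝ≥0∞) ∂P)⁻¹ ≤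
          ENNReal.ofReal α := by
  have hb := main_bound_s16 P ξ hmeas hindep hid hexp A hA
  refine ⟨hb, fun α h0 h1 hα => ?_⟩
  rw [ENNReal.inv_le_iff_inv_le]
  refine le_trans (le_of_eq ?_) hb
  rw [← ENNReal.ofReal_inv_of_pos h0, hα, abs_of_nonpos (Real.log_nonpos h0.le h1), Real.exp_neg,
    Real.exp_log h0]
end
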